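/- Convergence of DEKI with ergodic data (Theorem 2.2): under the ergodic DEKI setting, assume the initial ensemble is 𝓕_0-measurable, square-integrable, satisfies C_0 ⪰ σ_l·I almost surely for some σ_l > 0 with λ := 2ασ_l ∈ (0,1), E_0 > 0 and the step size obeys h ≤ min(α/(J(A_max + α)²), J/α)·E_0^{-1} almost surely. Then there exists a constant C > 0, not depending on ε, τ or T, such that for every ε > 0 and every integer τ ≥ 1 with ‖E[S_{t+1+τ}ᵀS_{t+1+τ} | 𝓕_t] − A‖ ≤ ε almost surely for all t ≥ 1 (ergodicity/mixing assumption), and for every T ≥ τ + 1, E[J(z̄_T)] − J(z^{opt}) ≤ C·( ε + (1 + τ·(1 + log τ + log T))/T^λ ). -/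

import Mathlib

open Matrix BigOperators MeasureTheory ProbabilityTheory

noncomputable section

/-- Sample mean of an ensemble. -/
def ensMean {d : ℕ} (J : ℕ) (z : Fin J → Fin d → ℝ) : Fin d → ℝ :=
  (J : ℝ)⁻¹ • ∑ j, z j

/-- Ensemble spread `e^{(j)} = z^{(j)} - z̄`. -/
def ensSpread {d : ℕ} (J : ℕ) (z : Fin J → Fin d → ℝ) (j : Fin J) : Fin d → ℝ :=
  z j - ensMean J z

/-- Sample covariance `C = (1/J) ∑_j e^{(j)} (e^{(j)})ᵀ`. -/
def ensCov {d : ℕ} (J : ℕ) (z : Fin J → Fin d → ℝ) : Matrix (Fin d) (Fin d) ℝ :=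
  (J : ℝ)⁻¹ • ∑ j, vecMulVec (ensSpread J z j) (ensSpread J z j)

/-- Squared Euclidean norm of a vector in `ℝ^d`. -/
def enormSq {d : ℕ} (v : Fin d → ℝ) : ℝ := ∑ i, (v i)^2

/-- Ensemble spread energy `E = (1/J)∑_j ‖e^{(j)}‖²`. -/
def ensEnergy {d : ℕ} (J : ℕ) (z : Fin J → Fin d → ℝ) : ℝ :=
  (J : ℝ)⁻¹ * ∑ j, enormSq (ensSpread J z j)

/-- The (Euclidean) operator norm of a square matrix. -/
def opNorm {d : ℕ} (M : Matrix (Fin d) (Fin d) ℝ) : ℝ :=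
  ‖Matrix.toEuclideanCLM (𝕜 := ℝ) M‖

/-- The limiting Tikhonov-regularized objective
`J(z) = ½⟨z − z_*, A(z − z_*)⟩ + (α/2)‖z‖²`. -/
def limObj {d : ℕ} (A : Matrix (Fin d) (Fin d) ℝ) (α : ℝ) (zstar : Fin d → ℝ)
    (z : Fin d → ℝ) : ℝ :=
  (1/2) * ((z - zstar) ⬝ᵥ (A *ᵥ (z - zstar))) + (α/2) * enormSq z

/-- The unique minimizer `z^{opt} = (A + αI)⁻¹ A z_*` of the limiting objective. -/
def limOpt {d : ℕ} (A : Matrix (Fin d) (Fin d) ℝ) (α : ℝ) (zstar : Fin d → ℝ) :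
    Fin d → ℝ :=
  (A + α • (1 : Matrix (Fin d) (Fin d) ℝ))⁻¹ *ᵥ (A *ᵥ zstar)

namespace DekiAux
open scoped Matrix.Norms.L2Operator

/-- Euclidean norm of a plain vector. -/
def vn {n : ℕ} (x : Fin n → ℝ) : ℝ := ‖(WithLp.toLp 2 x : EuclideanSpace ℝ (Fin n))‖

variable {n k l : ℕ}

lemma vn_nonneg (x : Fin n → ℝ) : 0 ≤ vn x := norm_nonneg _

lemma vn_sq (x : Fin n → ℝ) : vn x ^ 2 = x ⬝ᵥ x := by
  unfold vn
  rw [EuclideanSpace.norm_sq_eq]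
  simp [dotProduct, sq]

lemma vn_sq' (x : Fin n → ℝ) : vn x ^ 2 = enormSq x := by
  rw [vn_sq]; simp [enormSq, dotProduct, sq]

lemma vn_add (x y : Fin n → ℝ) : vn (x + y) ≤ vn x + vn y := by
  unfold vn; rw [WithLp.toLp_add]; exact norm_add_le _ _

lemma vn_zero : vn (0 : Fin n → ℝ) = 0 := by
  unfold vn; simp

lemma vn_smul (c : ℝ) (x : Fin n → ℝ) : vn (c • x) = |c| * vn x := by
  unfold vn; rw [WithLp.toLp_smul, norm_smul, Real.norm_eq_abs]

lemma dot_le (x y : Fin n → ℝ) : |x ⬝ᵥ y| ≤ vn x * vn y := by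
  have := abs_real_inner_le_norm (WithLp.toLp 2 y : EuclideanSpace ℝ (Fin n)) (WithLp.toLp 2 x)
  rw [EuclideanSpace.inner_toLp_toLp] at this
  simpa [vn, mul_comm] using this

lemma vn_mulVec (M : Matrix (Fin k) (Fin n) ℝ) (x : Fin n → ℝ) : vn (M *ᵥ x) ≤ ‖M‖ * vn x :=
  M.l2_opNorm_mulVec (WithLp.toLp 2 x)

lemma opNorm_eq (M : Matrix (Fin n) (Fin n) ℝ) : opNorm M = ‖M‖ := rfl

lemma norm_le_of_vn {M : Matrix (Fin k) (Fin n) ℝ} {c : ℝ} (hc : 0 ≤ c)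
    (hM : ∀ x, vn (M *ᵥ x) ≤ c * vn x) : ‖M‖ ≤ c := by
  rw [Matrix.l2_opNorm_def]
  refine ContinuousLinearMap.opNorm_le_bound _ hc fun x => ?_
  exact hM x.ofLp

lemma norm_transpose (M : Matrix (Fin k) (Fin n) ℝ) : ‖Mᵀ‖ = ‖M‖ := by
  rw [← Matrix.l2_opNorm_conjTranspose M, conjTranspose_eq_transpose_of_trivial]

/-- quadratic form -/
lemma quad_le (M : Matrix (Fin n) (Fin n) ℝ) (x : Fin n → ℝ) : x ⬝ᵥ (M *ᵥ x) ≤ ‖M‖ * vn x ^ 2 := by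
  have h1 := dot_le x (M *ᵥ x)
  have h2 := vn_mulVec M x
  have := vn_nonneg x
  nlinarith [le_abs_self (x ⬝ᵥ (M *ᵥ x))]

lemma dot_mulVec_transpose (M : Matrix (Fin k) (Fin n) ℝ) (x : Fin k → ℝ) (y : Fin n → ℝ) :
    x ⬝ᵥ (M *ᵥ y) = (Mᵀ *ᵥ x) ⬝ᵥ y := by
  rw [Matrix.dotProduct_mulVec, Matrix.mulVec_transpose]

lemma psd_factor {M : Matrix (Fin n) (Fin n) ℝ} (hM : M.PosSemidef) :
    ∃ B : Matrix (Fin n) (Fin n) ℝ, M = Bᵀ * B ∧ ‖M‖ = ‖B‖ * ‖B‖ ∧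
      ∀ x, x ⬝ᵥ (M *ᵥ x) = vn (B *ᵥ x) ^ 2 := by
  obtain ⟨B, hB⟩ : ∃ B : Matrix (Fin n) (Fin n) ℝ, M = Bᴴ * B := by
    open scoped MatrixOrder in
    exact CStarAlgebra.nonneg_iff_eq_star_mul_self.mp hM.nonneg
  refine ⟨B, by rw [hB, conjTranspose_eq_transpose_of_trivial], ?_, fun x => ?_⟩
  · rw [hB, Matrix.l2_opNorm_conjTranspose_mul_self]
  · rw [vn_sq, hB, conjTranspose_eq_transpose_of_trivial, ← Matrix.mulVec_mulVec,
      dot_mulVec_transpose, transpose_transpose]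

lemma psd_norm_le {M : Matrix (Fin n) (Fin n) ℝ} (hM : M.PosSemidef) {c : ℝ} (hc : 0 ≤ c)
    (h : ∀ x, x ⬝ᵥ (M *ᵥ x) ≤ c * vn x ^ 2) : ‖M‖ ≤ c := by
  obtain ⟨B, -, hn, hq⟩ := psd_factor hM
  have : ‖B‖ ≤ √c := by
    refine norm_le_of_vn (Real.sqrt_nonneg _) fun x => ?_
    refine abs_le_of_sq_le_sq' ?_ (by have := vn_nonneg x; positivity) |>.2
    rw [← hq, mul_pow, Real.sq_sqrt hc]; exact h x
  rw [hn, ← Real.mul_self_sqrt hc]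
  gcongr

lemma psd_sq_le {M : Matrix (Fin n) (Fin n) ℝ} (hM : M.PosSemidef) (x : Fin n → ℝ) :
    vn (M *ᵥ x) ^ 2 ≤ ‖M‖ * (x ⬝ᵥ (M *ᵥ x)) := by
  obtain ⟨B, hB, hn, hq⟩ := psd_factor hM
  rw [hq, hn]
  have : vn (M *ᵥ x) ≤ ‖B‖ * vn (B *ᵥ x) := by
    rw [hB, ← Matrix.mulVec_mulVec, ← norm_transpose B]; exact vn_mulVec _ _
  have h0 := vn_nonneg (M *ᵥ x)
  calc _ ≤ (‖B‖ * vn (B *ᵥ x))^2 := by gcongr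
    _ = _ := by ring

end DekiAux

namespace DekiAux
open scoped Matrix.Norms.L2Operator

/-- transition matrices -/
def Mseq {d : ℕ} (h α : ℝ) (C0 : Matrix (Fin d) (Fin d) ℝ) (B : ℕ → Matrix (Fin d) (Fin d) ℝ) :
    ℕ → Matrix (Fin d) (Fin d) ℝ
  | 0 => 1
  | t + 1 => (1 - h • (Mseq h α C0 B t * C0 * (Mseq h α C0 B t)ᵀ * (B t + α • 1)))
      * Mseq h α C0 B t

/-- covariance -/
def Cseq {d : ℕ} (h α : ℝ) (C0 : Matrix (Fin d) (Fin d) ℝ) (B : ℕ → Matrix (Fin d) (Fin d) ℝ)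
    (t : ℕ) : Matrix (Fin d) (Fin d) ℝ := Mseq h α C0 B t * C0 * (Mseq h α C0 B t)ᵀ

/-- resolvent -/
def Rseq {d : ℕ} (h α : ℝ) (C0 : Matrix (Fin d) (Fin d) ℝ) (B : ℕ → Matrix (Fin d) (Fin d) ℝ)
    (t : ℕ) : Matrix (Fin d) (Fin d) ℝ := (1 - h • ((B t + α • 1) * Cseq h α C0 B t))⁻¹

/-- gain -/
def Gseq {d : ℕ} (h α : ℝ) (C0 : Matrix (Fin d) (Fin d) ℝ) (B : ℕ → Matrix (Fin d) (Fin d) ℝ)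
    (t : ℕ) : Matrix (Fin d) (Fin d) ℝ := C0 * (Mseq h α C0 B t)ᵀ

/-- driven sums -/
def Yseq {d : ℕ} (D : ℕ → Matrix (Fin d) (Fin d) ℝ) (ξ : ℕ → Fin d → ℝ) : ℕ → Fin d → ℝ
  | 0 => 0
  | t + 1 => Yseq D ξ t + D t *ᵥ ξ t

/-- hypotheses on the data at one sample point -/
structure Good {d : ℕ} (h α Amax σ : ℝ) (C0 : Matrix (Fin d) (Fin d) ℝ)
    (B : ℕ → Matrix (Fin d) (Fin d) ℝ) : Prop where
  hC : C0.PosSemidef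
  hlow : ∀ x, σ * vn x ^ 2 ≤ x ⬝ᵥ (C0 *ᵥ x)
  hup : ∀ x, x ⬝ᵥ (C0 *ᵥ x) ≤ α / (h * (Amax + α) ^ 2) * vn x ^ 2
  hB : ∀ t, (B t).PosSemidef
  hBn : ∀ t, ‖B t‖ ≤ Amax

lemma Mseq_succ {d : ℕ} (h α : ℝ) (C0 : Matrix (Fin d) (Fin d) ℝ)
    (B : ℕ → Matrix (Fin d) (Fin d) ℝ) (t : ℕ) :
    Mseq h α C0 B (t+1) = (1 - h • (Cseq h α C0 B t * (B t + α • 1))) * Mseq h α C0 B t := rfl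

lemma Cseq_succ {d : ℕ} (h α : ℝ) (C0 : Matrix (Fin d) (Fin d) ℝ)
    (B : ℕ → Matrix (Fin d) (Fin d) ℝ) (t : ℕ) :
    Cseq h α C0 B (t+1) = (1 - h • (Cseq h α C0 B t * (B t + α • 1))) * Cseq h α C0 B t *
      (1 - h • (Cseq h α C0 B t * (B t + α • 1)))ᵀ := by
  have e : Cseq h α C0 B (t+1) = Mseq h α C0 B (t+1) * C0 * (Mseq h α C0 B (t+1))ᵀ := rfl
  have e' : Cseq h α C0 B t = Mseq h α C0 B t * C0 * (Mseq h α C0 B t)ᵀ := rfl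
  rw [e, Mseq_succ, transpose_mul]
  generalize (1 - h • (Cseq h α C0 B t * (B t + α • 1))) = Q
  rw [e']
  simp only [Matrix.mul_assoc]

lemma quad_step {d : ℕ} {h α θ : ℝ} (hh : 0 < h) (hα : 0 < α)
    {C H : Matrix (Fin d) (Fin d) ℝ} (hC : C.PosSemidef)
    (hH : H.PosSemidef) (hHα : ∀ x, α * vn x ^ 2 ≤ x ⬝ᵥ (H *ᵥ x))
    (hθ : h * (‖C‖ * ‖H‖) ≤ θ) (hθ1 : θ ≤ 1) (v : Fin d → ℝ) :
    v ⬝ᵥ (((1 - h • (C * H)) * C * (1 - h • (C * H))ᵀ) *ᵥ v)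
      ≤ v ⬝ᵥ (C *ᵥ v) - h * α * vn (C *ᵥ v) ^ 2 := by
  have hCt : Cᵀ = C := by simpa using hC.isHermitian.eq
  have hHt : Hᵀ = H := by simpa using hH.isHermitian.eq
  set x := C *ᵥ v with hx
  have e1 : (1 - h • (C * H)) * C * (1 - h • (C * H))ᵀ
      = C - (2 * h) • (C * H * C) + (h ^ 2) • (C * H * C * H * C) := by
    rw [transpose_sub, transpose_smul, transpose_mul, hCt, hHt, transpose_one]
    simp only [sub_mul, mul_sub, smul_mul_assoc, mul_smul_comm, smul_sub, smul_smul, mul_one, one_mul,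
      Matrix.mul_assoc]
    module
  have e2 : v ⬝ᵥ ((C * H * C) *ᵥ v) = x ⬝ᵥ (H *ᵥ x) := by
    rw [Matrix.mul_assoc, ← Matrix.mulVec_mulVec, dot_mulVec_transpose, hCt, ← Matrix.mulVec_mulVec]
  have e3 : v ⬝ᵥ ((C * H * C * H * C) *ᵥ v) = (H *ᵥ x) ⬝ᵥ (C *ᵥ (H *ᵥ x)) := by
    rw [Matrix.mul_assoc, Matrix.mul_assoc, Matrix.mul_assoc, ← Matrix.mulVec_mulVec,
      dot_mulVec_transpose, hCt, ← Matrix.mulVec_mulVec, dot_mulVec_transpose, hHt,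
      ← Matrix.mulVec_mulVec, ← Matrix.mulVec_mulVec]
  rw [e1, Matrix.add_mulVec, Matrix.sub_mulVec, Matrix.smul_mulVec, Matrix.smul_mulVec,
    dotProduct_add, dotProduct_sub, dotProduct_smul, dotProduct_smul, e2, e3]
  simp only [smul_eq_mul]
  have q0 : 0 ≤ x ⬝ᵥ (H *ᵥ x) := le_trans (by positivity) (hHα x)
  have q1 : (H *ᵥ x) ⬝ᵥ (C *ᵥ (H *ᵥ x)) ≤ ‖C‖ * (‖H‖ * (x ⬝ᵥ (H *ᵥ x))) :=
    (quad_le _ _).trans (by gcongr; exact psd_sq_le hH x)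
  have q2 : h * ((H *ᵥ x) ⬝ᵥ (C *ᵥ (H *ᵥ x))) ≤ x ⬝ᵥ (H *ᵥ x) := by
    calc _ ≤ h * (‖C‖ * (‖H‖ * (x ⬝ᵥ (H *ᵥ x)))) := by gcongr
      _ = h * (‖C‖ * ‖H‖) * (x ⬝ᵥ (H *ᵥ x)) := by ring
      _ ≤ 1 * (x ⬝ᵥ (H *ᵥ x)) := by gcongr; linarith
      _ = _ := one_mul _
  have q3 := mul_le_mul_of_nonneg_left (hHα x) hh.le
  have q4 := mul_le_mul_of_nonneg_left q2 hh.le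
  nlinarith

section det
variable {d : ℕ} {h α Amax σ : ℝ} {C0 : Matrix (Fin d) (Fin d) ℝ}
    {B : ℕ → Matrix (Fin d) (Fin d) ℝ}

lemma H_psd (hα : 0 < α) (g : Good h α Amax σ C0 B) (t : ℕ) : (B t + α • 1).PosSemidef :=
  (g.hB t).add (Matrix.PosSemidef.one.smul hα.le)

lemma H_low (g : Good h α Amax σ C0 B) (t : ℕ) (x : Fin d → ℝ) :
    α * vn x ^ 2 ≤ x ⬝ᵥ ((B t + α • 1) *ᵥ x) := by
  rw [Matrix.add_mulVec, Matrix.smul_mulVec, Matrix.one_mulVec, dotProduct_add, dotProduct_smul,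
    vn_sq, smul_eq_mul]
  have := (g.hB t).dotProduct_mulVec_nonneg x
  simp only [star_trivial] at this
  linarith

lemma H_norm (hd : 0 < d) (hα : 0 < α) (g : Good h α Amax σ C0 B) (t : ℕ) :
    ‖B t + α • 1‖ ≤ Amax + α := by
  have : Nonempty (Fin d) := ⟨⟨0, hd⟩⟩
  calc _ ≤ ‖B t‖ + ‖α • (1 : Matrix (Fin d) (Fin d) ℝ)‖ := norm_add_le _ _
    _ ≤ Amax + α := by
      rw [norm_smul, CStarRing.norm_one, Real.norm_eq_abs, abs_of_pos hα, mul_one]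
      linarith [g.hBn t]

lemma C_psd (g : Good h α Amax σ C0 B) (t : ℕ) : (Cseq h α C0 B t).PosSemidef := by
  have := g.hC.mul_mul_conjTranspose_same (Mseq h α C0 B t)
  simpa [Cseq] using this

lemma theta_aux (hh : 0 < h) (hα : 0 < α) (hA : 0 < Amax) {c b : ℝ} (hb0 : 0 ≤ b)
    (hc : c ≤ α / (h * (Amax + α) ^ 2)) (hb : b ≤ Amax + α) :
    h * (c * b) ≤ α / (Amax + α) := by
  calc h * (c * b) ≤ h * (α / (h * (Amax + α) ^ 2) * (Amax + α)) := by gcongr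
    _ = α / (Amax + α) := by field_simp

lemma C_quad (hd : 0 < d) (hh : 0 < h) (hα : 0 < α) (hA : 0 < Amax)
    (g : Good h α Amax σ C0 B) (t : ℕ) : ∀ x,
    x ⬝ᵥ (Cseq h α C0 B t *ᵥ x) ≤ α / (h * (Amax + α) ^ 2) * vn x ^ 2 ∧
    h * α * (t + 1) * (x ⬝ᵥ (Cseq h α C0 B t *ᵥ x)) ≤ vn x ^ 2 := by
  induction t with
  | zero =>
    intro x
    have e : Cseq h α C0 B 0 = C0 := by simp [Cseq, Mseq]
    rw [e]
    refine ⟨g.hup x, ?_⟩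
    calc _ ≤ h * α * ((0:ℕ) + 1) * (α / (h * (Amax + α) ^ 2) * vn x ^ 2) := by
          gcongr; exact g.hup x
      _ = (α ^ 2 / (Amax + α) ^ 2) * vn x ^ 2 := by field_simp; simp
      _ ≤ 1 * vn x ^ 2 := by
          gcongr
          rw [div_le_one (by positivity)]; gcongr; linarith
      _ = _ := one_mul _
  | succ t ih =>
    intro x
    set C := Cseq h α C0 B t with hCdef
    have hCp : C.PosSemidef := C_psd g t
    have hCn : ‖C‖ ≤ α / (h * (Amax + α) ^ 2) :=
      psd_norm_le hCp (by positivity) fun y => (ih y).1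
    have hθ := theta_aux hh hα hA (norm_nonneg _) hCn (H_norm hd hα g t)
    have e : Cseq h α C0 B (t+1) =
        (1 - h • (C * (B t + α • 1))) * C * (1 - h • (C * (B t + α • 1)))ᵀ := Cseq_succ ..
    have hst := quad_step hh hα hCp (H_psd hα g t) (H_low g t) hθ
      (by rw [div_le_one (by positivity)]; linarith) x
    rw [← e] at hst
    obtain ⟨h1, h2⟩ := ih x
    have hp : 0 ≤ h * α * vn (C *ᵥ x) ^ 2 := by positivity
    refine ⟨by linarith, ?_⟩
    set q := x ⬝ᵥ (C *ᵥ x)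
    have hq0 : 0 ≤ q := by simpa using hCp.dotProduct_mulVec_nonneg x
    have hcs : q ^ 2 ≤ vn x ^ 2 * vn (C *ᵥ x) ^ 2 := by
      have := dot_le x (C *ᵥ x)
      rw [← mul_pow, ← sq_abs]; gcongr
    set q' := x ⬝ᵥ (Cseq h α C0 B (t+1) *ᵥ x)
    set N := vn x ^ 2
    set Y := vn (C *ᵥ x) ^ 2
    have hN : 0 ≤ N := by positivity
    push_cast
    rcases hN.eq_or_lt with hN0 | hNp
    · have : q = 0 := by
        rw [← hN0, mul_zero] at h1; linarith
      have : q' ≤ 0 := by linarith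
      have : 0 ≤ h * α * (t + 1 + 1) := by positivity
      nlinarith
    · -- r = hα q / N
      have hr : (h * α) * q' ≤ h * α * q - (h * α * q) ^ 2 / N := by
        have : q ^ 2 / N ≤ Y := by rw [div_le_iff₀ hNp]; linarith
        have h3 : (h * α * q) ^ 2 / N = (h*α)^2 * (q^2/N) := by ring
        rw [h3]
        have := mul_le_mul_of_nonneg_left this (by positivity : 0 ≤ (h*α)^2)
        have := mul_le_mul_of_nonneg_left hst (by positivity : 0 ≤ h*α)
        nlinarith
      set a := h * α * q with ha
      have ha0 : 0 ≤ a := by positivity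
      have h2' : (t + 1) * a ≤ N := by rw [ha]; linarith
      have haN : a ≤ N := by nlinarith [Nat.cast_nonneg (α := ℝ) t]
      have : (t + 1 + 1) * (a - a ^ 2 / N) ≤ N := by
        have e : (t + 1 + 1) * (a - a ^ 2 / N) = ((t+1) * a + a) * (N - a) / N := by
          field_simp
        rw [e, div_le_iff₀ hNp]
        nlinarith
      calc _ = (t + 1 + 1) * (h * α * q') := by ring
        _ ≤ (t + 1 + 1) * (a - a ^ 2 / N) := by gcongr
        _ ≤ N := this

lemma sqrt_aux {K s : ℝ} (hs : 0 < s) : √(K / s) = √K / √s := Real.sqrt_div' _ hs.le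

/-- all deterministic bounds, with one constant -/
theorem det_bounds (hd : 0 < d) (hh : 0 < h) (hα : 0 < α) (hA : 0 < Amax) (hσ : 0 < σ) :
    ∃ κ : ℝ, 0 < κ ∧ ∀ (C0 : Matrix (Fin d) (Fin d) ℝ) (B : ℕ → Matrix (Fin d) (Fin d) ℝ),
      Good h α Amax σ C0 B → ∀ t : ℕ,
      ‖Mseq h α C0 B t‖ ≤ κ / √(t + 1) ∧ ‖Gseq h α C0 B t‖ ≤ κ / √(t + 1) ∧
      ‖Gseq h α C0 B t * Rseq h α C0 B t‖ ≤ κ / √(t + 1) ∧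
      ‖Gseq h α C0 B t * Rseq h α C0 B t - Gseq h α C0 B t‖ ≤ κ / ((t + 1) * √(t + 1)) ∧
      ‖Gseq h α C0 B (t + 1) - Gseq h α C0 B t‖ ≤ κ / ((t + 1) * √(t + 1)) ∧
      (1 - h • ((B t + α • 1) * Cseq h α C0 B t)) * Rseq h α C0 B t = 1 := by
  have hne : Nonempty (Fin d) := ⟨⟨0, hd⟩⟩
  set L := Amax + α with hL
  have hLp : 0 < L := by positivity
  set θ := α / L with hθdef
  have hθ0 : 0 < θ := by positivity
  have hθ1 : θ < 1 := by rw [hθdef, div_lt_one hLp]; linarith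
  set c0 := α / (h * L ^ 2) with hc0
  have hc0p : 0 < c0 := by positivity
  set ρ := 1 / (1 - θ) with hρ
  have hρp : 0 < ρ := by have : 0 < 1 - θ := by linarith
                         positivity
  set K := 1 / (h * α) with hK
  have hKp : 0 < K := by positivity
  set k := √(K / σ) with hk
  have hkp : 0 < k := by positivity
  refine ⟨k + c0 * k + c0 * k * ρ + c0 * k * (h * L * K * ρ) + c0 * (h * L * K * k), by positivity,
    fun C0 B g t => ?_⟩
  set κ := k + c0 * k + c0 * k * ρ + c0 * k * (h * L * K * ρ) + c0 * (h * L * K * k) with hκ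
  have p1 : 0 < c0 * k := by positivity
  have p2 : 0 < c0 * k * ρ := by positivity
  have p3 : 0 < c0 * k * (h * L * K * ρ) := by positivity
  have p4 : 0 < c0 * (h * L * K * k) := by positivity
  have ht : (0:ℝ) < t + 1 := by positivity
  have hst : 0 < √((t:ℝ) + 1) := by positivity
  set M := Mseq h α C0 B t with hM
  set C := Cseq h α C0 B t with hC
  set H := B t + α • (1 : Matrix (Fin d) (Fin d) ℝ) with hH
  have hCq := C_quad hd hh hα hA g t
  have hCn : ‖C‖ ≤ c0 := psd_norm_le (C_psd g t) hc0p.le fun x => (hCq x).1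
  have hCn' : ‖C‖ ≤ K / (t + 1) := psd_norm_le (C_psd g t) (by positivity) fun x => by
    have := (hCq x).2
    rw [hK, div_div, div_mul_eq_mul_div, le_div_iff₀ (by positivity)]
    linarith
  have hHn : ‖H‖ ≤ L := H_norm hd hα g t
  have hC0n : ‖C0‖ ≤ c0 := psd_norm_le g.hC hc0p.le g.hup
  have hMn : ‖M‖ ≤ k / √(t + 1) := by
    rw [← norm_transpose]
    refine norm_le_of_vn (by positivity) fun x => ?_
    refine abs_le_of_sq_le_sq' ?_ (by have := vn_nonneg x; positivity) |>.2
    have h1 := g.hlow (Mᵀ *ᵥ x)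
    have h2 : (Mᵀ *ᵥ x) ⬝ᵥ (C0 *ᵥ (Mᵀ *ᵥ x)) = x ⬝ᵥ (C *ᵥ x) := by
      rw [hC, Cseq, ← Matrix.mulVec_mulVec, ← Matrix.mulVec_mulVec,
        dot_mulVec_transpose (Mseq h α C0 B t)]
    rw [h2] at h1
    have h3 : x ⬝ᵥ (C *ᵥ x) ≤ K / (t + 1) * vn x ^ 2 :=
      (quad_le _ _).trans (by gcongr)
    rw [mul_pow, div_pow, Real.sq_sqrt (by positivity), Real.sq_sqrt (by positivity)]
    have h4 : σ * vn (Mᵀ *ᵥ x) ^ 2 ≤ K / (t + 1) * vn x ^ 2 := h1.trans h3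
    calc _ = (σ * vn (Mᵀ *ᵥ x) ^ 2) / σ := by field_simp
      _ ≤ (K / (t + 1) * vn x ^ 2) / σ := by gcongr
      _ = _ := by field_simp
  have hGn : ‖Gseq h α C0 B t‖ ≤ c0 * k / √(t + 1) := by
    calc ‖C0 * Mᵀ‖ ≤ ‖C0‖ * ‖Mᵀ‖ := norm_mul_le _ _
      _ ≤ c0 * (k / √(t+1)) := by rw [norm_transpose]; gcongr
      _ = _ := by ring
  set X := h • (H * C) with hX
  have hXn : ‖X‖ ≤ θ := by
    calc ‖X‖ = h * ‖H * C‖ := by rw [hX, norm_smul, Real.norm_eq_abs, abs_of_pos hh]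
      _ ≤ h * (‖C‖ * ‖H‖) := by
        gcongr; rw [mul_comm]; exact norm_mul_le _ _
      _ ≤ θ := theta_aux hh hα hA (norm_nonneg _) hCn hHn
  have hXn' : ‖X‖ ≤ h * L * K / (t + 1) := by
    calc ‖X‖ = h * ‖H * C‖ := by rw [hX, norm_smul, Real.norm_eq_abs, abs_of_pos hh]
      _ ≤ h * (‖H‖ * ‖C‖) := by gcongr; exact norm_mul_le _ _
      _ ≤ h * (L * (K / (t+1))) := by gcongr
      _ = _ := by ring
  set R := Rseq h α C0 B t with hR
  have hinv : (1 - X) * R = 1 := by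
    have hu : IsUnit (1 - X) := isUnit_one_sub_of_norm_lt_one (hXn.trans_lt hθ1)
    exact Matrix.mul_nonsing_inv _ ((Matrix.isUnit_iff_isUnit_det _).1 hu)
  have hR1 : R - 1 = X * R := by
    rw [sub_mul, one_mul] at hinv
    rw [← hinv]; abel
  have hRn : ‖R‖ ≤ ρ := by
    have : ‖R‖ ≤ 1 + θ * ‖R‖ := by
      calc ‖R‖ = ‖1 + X * R‖ := by rw [← hR1]; congr 1; abel
        _ ≤ ‖(1 : Matrix (Fin d) (Fin d) ℝ)‖ + ‖X * R‖ := norm_add_le _ _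
        _ ≤ 1 + ‖X‖ * ‖R‖ := by rw [CStarRing.norm_one]; gcongr; exact norm_mul_le _ _
        _ ≤ 1 + θ * ‖R‖ := by gcongr
    rw [hρ, le_div_iff₀ (by linarith)]; linarith
  have hR1n : ‖R - 1‖ ≤ h * L * K * ρ / (t + 1) := by
    rw [hR1]
    calc ‖X * R‖ ≤ ‖X‖ * ‖R‖ := norm_mul_le _ _
      _ ≤ h * L * K / (t + 1) * ρ := by gcongr
      _ = _ := by ring
  refine ⟨hMn.trans ?_, hGn.trans ?_, ?_, ?_, ?_, hinv⟩
  · gcongr; linarith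
  · gcongr; linarith
  · calc _ ≤ ‖Gseq h α C0 B t‖ * ‖R‖ := norm_mul_le _ _
      _ ≤ c0 * k / √(t + 1) * ρ := by gcongr
      _ = c0 * k * ρ / √(t + 1) := by ring
      _ ≤ _ := by gcongr; linarith
  · have : Gseq h α C0 B t * R - Gseq h α C0 B t = Gseq h α C0 B t * (R - 1) := by
      rw [mul_sub, mul_one]
    rw [this]
    calc _ ≤ ‖Gseq h α C0 B t‖ * ‖R - 1‖ := norm_mul_le _ _
      _ ≤ c0 * k / √(t + 1) * (h * L * K * ρ / (t + 1)) := by gcongr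
      _ = c0 * k * (h * L * K * ρ) / ((t + 1) * √(t + 1)) := by field_simp
      _ ≤ _ := by gcongr; linarith
  · have : Gseq h α C0 B (t+1) - Gseq h α C0 B t = - (C0 * (h • (C * H) * M)ᵀ) := by
      simp only [Gseq]
      rw [Mseq_succ, ← mul_sub, ← transpose_sub, sub_mul, one_mul, sub_sub_cancel_left,
        transpose_neg, mul_neg]
    rw [this, norm_neg]
    calc _ ≤ ‖C0‖ * ‖(h • (C * H) * M)ᵀ‖ := norm_mul_le _ _
      _ ≤ c0 * (h * (‖C‖ * ‖H‖) * ‖M‖) := by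
        rw [norm_transpose]
        gcongr
        calc _ ≤ ‖h • (C * H)‖ * ‖M‖ := norm_mul_le _ _
          _ ≤ _ := by
            rw [norm_smul, Real.norm_eq_abs, abs_of_pos hh]
            gcongr; exact norm_mul_le _ _
      _ ≤ c0 * (h * (K / (t + 1) * L) * (k / √(t + 1))) := by gcongr
      _ = c0 * (h * L * K * k) / ((t + 1) * √(t + 1)) := by field_simp
      _ ≤ _ := by gcongr; linarith

/-- factorization of affine recursions through `Mseq` -/
lemma factor_Y {ξ : ℕ → Fin d → ℝ} {m : ℕ → Fin d → ℝ}
    (hinv : ∀ t, (1 - h • ((B t + α • 1) * Cseq h α C0 B t)) * Rseq h α C0 B t = 1)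
    (hm : ∀ t, m (t+1) = (1 - h • (Cseq h α C0 B t * (B t + α • 1))) *ᵥ m t
      - h • (Cseq h α C0 B t *ᵥ ξ t)) (t : ℕ) :
    m t = Mseq h α C0 B t *ᵥ
      (m 0 - h • Yseq (fun t => Gseq h α C0 B t * Rseq h α C0 B t) ξ t) := by
  induction t with
  | zero => simp [Mseq, Yseq]
  | succ t ih =>
    rw [hm, Mseq_succ]
    have e : Yseq (fun t => Gseq h α C0 B t * Rseq h α C0 B t) ξ (t+1) =
      Yseq (fun t => Gseq h α C0 B t * Rseq h α C0 B t) ξ t +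
        (Gseq h α C0 B t * Rseq h α C0 B t) *ᵥ ξ t := rfl
    rw [e, smul_add, ← sub_sub, Matrix.mulVec_sub, ← Matrix.mulVec_mulVec, ← ih]
    congr 1
    rw [Matrix.mulVec_smul, Matrix.mulVec_mulVec]
    congr 2
    have e1 : Mseq h α C0 B t * Gseq h α C0 B t = Cseq h α C0 B t := by
      rw [Gseq, Cseq, Matrix.mul_assoc]
    rw [Matrix.mul_assoc, ← Matrix.mul_assoc (Mseq h α C0 B t), e1]
    have e2 : (1 - h • (Cseq h α C0 B t * (B t + α • 1))) * Cseq h α C0 B t =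
      Cseq h α C0 B t * (1 - h • ((B t + α • 1) * Cseq h α C0 B t)) := by
      simp only [sub_mul, mul_sub, one_mul, mul_one, smul_mul_assoc, mul_smul_comm,
        Matrix.mul_assoc]
    rw [← Matrix.mul_assoc, e2, Matrix.mul_assoc, hinv, Matrix.mul_one]

end det

lemma Yseq_sub {d : ℕ} (D : ℕ → Matrix (Fin d) (Fin d) ℝ) (ξ η : ℕ → Fin d → ℝ) (t : ℕ) :
    Yseq D (fun t => ξ t - η t) t = Yseq D ξ t - Yseq D η t := by
  induction t with
  | zero => simp [Yseq]
  | succ t ih => simp only [Yseq, ih, Matrix.mulVec_sub]; abel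

end DekiAux

namespace DekiAux
open scoped Matrix.Norms.L2Operator

lemma inv_sqrt_le (r : ℕ) : 1 / √((r:ℝ) + 1) ≤ 2 * (√((r:ℝ) + 1) - √r) := by
  have h1 : 0 < √((r:ℝ) + 1) := by positivity
  have h0 : 0 ≤ √(r:ℝ) := by positivity
  have e1 := Real.sq_sqrt (by positivity : (0:ℝ) ≤ r + 1)
  have e0 := Real.sq_sqrt (by positivity : (0:ℝ) ≤ r)
  rw [div_le_iff₀ h1]
  nlinarith [sq_nonneg (√((r:ℝ) + 1) - √r)]

section
variable {d : ℕ} {κ β : ℝ} {G D : ℕ → Matrix (Fin d) (Fin d) ℝ} {ξ : ℕ → Fin d → ℝ}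

lemma Yinc (hκ : 0 < κ) (hD : ∀ t : ℕ, ‖D t‖ ≤ κ / √(t + 1))
    (hξ : ∀ t, vn (ξ t) ≤ β) (t : ℕ) : vn (D t *ᵥ ξ t) ≤ κ * β / √(t + 1) := by
  calc _ ≤ ‖D t‖ * vn (ξ t) := vn_mulVec _ _
    _ ≤ κ / √(t + 1) * β := mul_le_mul (hD t) (hξ t) (vn_nonneg _) (by positivity)
    _ = _ := by ring

lemma Ybound (hκ : 0 < κ) (hD : ∀ t : ℕ, ‖D t‖ ≤ κ / √(t + 1))
    (hξ : ∀ t, vn (ξ t) ≤ β) (t : ℕ) : vn (Yseq D ξ t) ≤ 2 * κ * β * √t := by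
  have hβ : 0 ≤ β := (vn_nonneg _).trans (hξ 0)
  induction t with
  | zero => simp [Yseq, vn_zero]
  | succ t ih =>
    calc vn (Yseq D ξ t + D t *ᵥ ξ t) ≤ vn (Yseq D ξ t) + vn (D t *ᵥ ξ t) := vn_add _ _
      _ ≤ 2 * κ * β * √t + κ * β * (1 / √(t+1)) := by
        have := Yinc hκ hD hξ t
        rw [mul_one_div]; linarith
      _ ≤ 2 * κ * β * √t + κ * β * (2 * (√((t:ℝ) + 1) - √t)) := by
        gcongr; exact inv_sqrt_le t
      _ = _ := by push_cast; ring

lemma Ydiff (hκ : 0 < κ) (hD : ∀ t : ℕ, ‖D t‖ ≤ κ / √(t + 1))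
    (hξ : ∀ t, vn (ξ t) ≤ β) (s n : ℕ) :
    vn (Yseq D ξ (s + n) - Yseq D ξ s) ≤ n * (κ * β / √(s + 1)) := by
  have hβ : 0 ≤ β := (vn_nonneg _).trans (hξ 0)
  induction n with
  | zero => simp [vn_zero]
  | succ n ih =>
    have e : Yseq D ξ (s + (n+1)) - Yseq D ξ s
      = (Yseq D ξ (s + n) - Yseq D ξ s) + D (s+n) *ᵥ ξ (s+n) := by
      rw [← add_assoc]; simp only [Yseq]; abel
    rw [e]
    have h2 : κ * β / √((s + n : ℕ) + 1) ≤ κ * β / √(s + 1) := by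
      gcongr; push_cast; linarith
    have := vn_add (Yseq D ξ (s + n) - Yseq D ξ s) (D (s+n) *ᵥ ξ (s+n))
    have := Yinc hκ hD hξ (s+n)
    push_cast at *
    linarith

lemma Gdiff (hκ : 0 < κ) (hG : ∀ t : ℕ, ‖G (t+1) - G t‖ ≤ κ / ((t + 1) * √(t + 1))) (s n : ℕ) :
    ‖G (s + n) - G s‖ ≤ n * (κ / ((s + 1) * √(s + 1))) := by
  induction n with
  | zero => simp
  | succ n ih =>
    have e : G (s + (n+1)) - G s = (G (s + n + 1) - G (s + n)) + (G (s + n) - G s) := by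
      rw [← add_assoc]; abel
    rw [e]
    have h2 : κ / (((s + n : ℕ) + 1) * √((s + n : ℕ) + 1)) ≤ κ / ((s + 1) * √(s + 1)) := by
      gcongr <;> (push_cast; linarith)
    have := norm_add_le (G (s + n + 1) - G (s + n)) (G (s + n) - G s)
    have := hG (s+n)
    push_cast at *
    linarith

lemma dot_mul_le (x y : Fin d → ℝ) (M : Matrix (Fin d) (Fin d) ℝ) {a b c : ℝ} (hx : vn x ≤ a)
    (hM : ‖M‖ ≤ b) (hy : vn y ≤ c) : x ⬝ᵥ (M *ᵥ y) ≤ a * (b * c) := by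
  have ha := (vn_nonneg x).trans hx
  have hb := (norm_nonneg M).trans hM
  calc _ ≤ vn x * vn (M *ᵥ y) := (le_abs_self _).trans (dot_le _ _)
    _ ≤ a * (b * c) := by
      refine mul_le_mul hx ((vn_mulVec _ _).trans ?_) (vn_nonneg _) ha
      exact mul_le_mul hM hy (vn_nonneg _) hb

lemma Ystep (hκ : 0 < κ) (hD : ∀ t : ℕ, ‖D t‖ ≤ κ / √(t + 1))
    (hG : ∀ t : ℕ, ‖G t‖ ≤ κ / √(t + 1))
    (hDG : ∀ t : ℕ, ‖D t - G t‖ ≤ κ / ((t + 1) * √(t + 1)))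
    (hGG : ∀ t : ℕ, ‖G (t+1) - G t‖ ≤ κ / ((t + 1) * √(t + 1)))
    (hξ : ∀ t, vn (ξ t) ≤ β) (s n : ℕ) (hn : 1 ≤ n) :
    vn (Yseq D ξ (s + n + 1)) ^ 2 ≤ vn (Yseq D ξ (s + n)) ^ 2
      + 2 * (Yseq D ξ s ⬝ᵥ (G s *ᵥ ξ (s + n))) + 11 * (κ * β) ^ 2 * (n / (s + 1)) := by
  have hβ : 0 ≤ β := (vn_nonneg _).trans (hξ 0)
  set Y := Yseq D ξ with hY
  set t := s + n with ht
  have e0 : Y (t+1) = Y t + D t *ᵥ ξ t := rfl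
  have e1 : vn (Y (t+1)) ^ 2 = vn (Y t) ^ 2 + 2 * (Y t ⬝ᵥ (D t *ᵥ ξ t)) + vn (D t *ᵥ ξ t) ^ 2 := by
    rw [e0, vn_sq, vn_sq, vn_sq, add_dotProduct, dotProduct_add, dotProduct_add,
      dotProduct_comm (D t *ᵥ ξ t) (Y t)]
    ring
  have e2 : Y t ⬝ᵥ (D t *ᵥ ξ t) = Y s ⬝ᵥ (G s *ᵥ ξ t) + Y t ⬝ᵥ ((D t - G t) *ᵥ ξ t)
      + (Y t - Y s) ⬝ᵥ (G t *ᵥ ξ t) + Y s ⬝ᵥ ((G t - G s) *ᵥ ξ t) := by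
    simp only [Matrix.sub_mulVec, dotProduct_sub, sub_dotProduct]; ring
  have hs0 : (0:ℝ) < s + 1 := by positivity
  have hss : √((s:ℝ)+1) * √((s:ℝ)+1) = s + 1 := Real.mul_self_sqrt hs0.le
  have hsp : 0 < √((s:ℝ)+1) := by positivity
  have hst : (s:ℝ) + 1 ≤ t + 1 := by rw [ht]; push_cast; linarith
  have htt : √((t:ℝ)+1) * √((t:ℝ)+1) = t + 1 := Real.mul_self_sqrt (by positivity)
  have htp : 0 < √((t:ℝ)+1) := by positivity
  have hn1 : (1:ℝ) ≤ n := by exact_mod_cast hn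
  have hinv : 1 / ((t:ℝ) + 1) ≤ n / (s + 1) := by gcongr
  have b1 : Y t ⬝ᵥ ((D t - G t) *ᵥ ξ t) ≤ 2 * (κ * β)^2 * (n / (s + 1)) := by
    calc _ ≤ (2 * κ * β * √(t+1)) * (κ / ((t + 1) * √(t + 1)) * β) :=
          dot_mul_le _ _ _ ((Ybound hκ hD hξ t).trans (by gcongr; linarith)) (hDG t) (hξ t)
      _ = 2 * (κ * β)^2 * (1 / (t + 1)) := by field_simp
      _ ≤ _ := by gcongr
  have b2 : (Y t - Y s) ⬝ᵥ (G t *ᵥ ξ t) ≤ (κ * β)^2 * (n / (s + 1)) := by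
    calc _ ≤ (n * (κ * β / √(s + 1))) * (κ / √(s + 1) * β) :=
          dot_mul_le _ _ _ (Ydiff hκ hD hξ s n) ((hG t).trans (by gcongr)) (hξ t)
      _ = (κ * β)^2 * (n / (√(s + 1) * √(s + 1))) := by field_simp
      _ = _ := by rw [hss]
  have b3 : Y s ⬝ᵥ ((G t - G s) *ᵥ ξ t) ≤ 2 * (κ * β)^2 * (n / (s + 1)) := by
    calc _ ≤ (2 * κ * β * √(s+1)) * (n * (κ / ((s + 1) * √(s + 1))) * β) :=
          dot_mul_le _ _ _ ((Ybound hκ hD hξ s).trans (by gcongr; linarith)) (Gdiff hκ hGG s n) (hξ t)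
      _ = _ := by field_simp
  have b4 : vn (D t *ᵥ ξ t) ^ 2 ≤ (κ * β)^2 * (n / (s + 1)) := by
    calc _ ≤ (κ * β / √(t + 1)) ^ 2 := by
          have := vn_nonneg (D t *ᵥ ξ t)
          gcongr; exact Yinc hκ hD hξ t
      _ = (κ * β)^2 * (1 / (t + 1)) := by
          rw [div_pow, Real.sq_sqrt (by positivity)]; ring
      _ ≤ _ := by gcongr
  rw [e1, e2]
  linarith
end

/-! ### entrywise measurability -/
section meas
variable {Ω : Type*} {a b c : ℕ}

/-- entrywise measurable random matrix -/
def MM (m : MeasurableSpace Ω) (F : Ω → Matrix (Fin a) (Fin b) ℝ) : Prop :=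
  ∀ i k, Measurable[m] fun ω => F ω i k

/-- coordinatewise measurable random vector -/
def MV (m : MeasurableSpace Ω) (x : Ω → Fin a → ℝ) : Prop := ∀ i, Measurable[m] fun ω => x ω i

variable {m m' : MeasurableSpace Ω}

lemma MM.mono {F : Ω → Matrix (Fin a) (Fin b) ℝ} (hF : MM m F) (h : m ≤ m') : MM m' F :=
  fun i k => (hF i k).mono h le_rfl

lemma MV.mono {F : Ω → Fin a → ℝ} (hF : MV m F) (h : m ≤ m') : MV m' F :=
  fun i => (hF i).mono h le_rfl

lemma MM.const (M : Matrix (Fin a) (Fin b) ℝ) : MM m (fun _ : Ω => M) :=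
  fun _ _ => measurable_const

lemma MM.mul {F : Ω → Matrix (Fin a) (Fin b) ℝ} {G : Ω → Matrix (Fin b) (Fin c) ℝ}
    (hF : MM m F) (hG : MM m G) : MM m (fun ω => F ω * G ω) := by
  intro i k
  simp only [Matrix.mul_apply]
  exact Finset.measurable_fun_sum _ fun j _ => (hF i j).mul (hG j k)

lemma MM.add {F G : Ω → Matrix (Fin a) (Fin b) ℝ}
    (hF : MM m F) (hG : MM m G) : MM m (fun ω => F ω + G ω) :=
  fun i k => (hF i k).add (hG i k)

lemma MM.sub {F G : Ω → Matrix (Fin a) (Fin b) ℝ}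
    (hF : MM m F) (hG : MM m G) : MM m (fun ω => F ω - G ω) :=
  fun i k => (hF i k).sub (hG i k)

lemma MM.smul {F : Ω → Matrix (Fin a) (Fin b) ℝ} (r : ℝ)
    (hF : MM m F) : MM m (fun ω => r • F ω) :=
  fun i k => (hF i k).const_mul r

lemma MM.transpose {F : Ω → Matrix (Fin a) (Fin b) ℝ} (hF : MM m F) : MM m (fun ω => (F ω)ᵀ) :=
  fun i k => hF k i

lemma MM.det {F : Ω → Matrix (Fin a) (Fin a) ℝ} (hF : MM m F) :
    Measurable[m] fun ω => (F ω).det := by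
  simp only [Matrix.det_apply]
  refine Finset.measurable_fun_sum _ fun j _ => ?_
  exact (Finset.measurable_fun_prod _ fun i _ => hF _ _).const_smul _

lemma MM.inv {F : Ω → Matrix (Fin a) (Fin a) ℝ} (hF : MM m F) : MM m (fun ω => (F ω)⁻¹) := by
  intro i k
  simp only [Matrix.inv_def, Ring.inverse_eq_inv', Matrix.smul_apply, smul_eq_mul,
    Matrix.adjugate_apply]
  refine hF.det.inv.mul (MM.det fun p q => ?_)
  by_cases hp : p = k
  · subst hp; simp only [Matrix.updateRow_self]; exact measurable_const
  · simp only [Matrix.updateRow_ne hp]; exact hF p q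

lemma MM.mulVec {F : Ω → Matrix (Fin a) (Fin b) ℝ} {x : Ω → Fin b → ℝ}
    (hF : MM m F) (hx : MV m x) : MV m (fun ω => F ω *ᵥ x ω) := by
  intro i
  simp only [Matrix.mulVec, dotProduct]
  exact Finset.measurable_fun_sum _ fun j _ => (hF i j).mul (hx j)

lemma MV.add {x y : Ω → Fin b → ℝ} (hx : MV m x) (hy : MV m y) : MV m (fun ω => x ω + y ω) :=
  fun i => (hx i).add (hy i)

lemma MV.dot {x y : Ω → Fin b → ℝ} (hx : MV m x) (hy : MV m y) :
    Measurable[m] (fun ω => x ω ⬝ᵥ y ω) := by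
  simp only [dotProduct]
  exact Finset.measurable_fun_sum _ fun j _ => (hx j).mul (hy j)

lemma MV.vn_sq {x : Ω → Fin b → ℝ} (hx : MV m x) : Measurable[m] (fun ω => vn (x ω) ^ 2) := by
  simp only [DekiAux.vn_sq]; exact hx.dot hx

lemma MV.vn {x : Ω → Fin b → ℝ} (hx : MV m x) : Measurable[m] (fun ω => vn (x ω)) := by
  have : (fun ω => DekiAux.vn (x ω)) = fun ω => √(DekiAux.vn (x ω) ^ 2) := by
    ext ω; rw [Real.sqrt_sq (vn_nonneg _)]
  rw [this]
  exact hx.vn_sq.sqrt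

end meas
end DekiAux

namespace DekiAux
open scoped Matrix.Norms.L2Operator

lemma coord_le {n : ℕ} (x : Fin n → ℝ) (i : Fin n) : |x i| ≤ vn x := by
  have := PiLp.norm_apply_le (WithLp.toLp 2 x : EuclideanSpace ℝ (Fin n)) i
  simpa [vn] using this

lemma entry_le {a b : ℕ} (M : Matrix (Fin a) (Fin b) ℝ) (i : Fin a) (k : Fin b) :
    |M i k| ≤ ‖M‖ := by
  have h1 := coord_le (M *ᵥ Pi.single k 1) i
  have h2 := vn_mulVec M (Pi.single k 1)
  have h3 : vn (Pi.single k 1 : Fin b → ℝ) = 1 := by simp [vn]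
  rw [h3, mul_one] at h2
  have h4 : (M *ᵥ Pi.single k 1) i = M i k := by simp
  rw [h4] at h1
  exact h1.trans h2

section prob
variable {Ω : Type*} {m : MeasurableSpace Ω} {μ : Measure Ω} [IsProbabilityMeasure μ] {d : ℕ}

lemma cond_step {m0 : MeasurableSpace Ω} (hm : m0 ≤ m) {q : Ω → Fin d → ℝ} (hq : MV m0 q)
    {F : Ω → Matrix (Fin d) (Fin d) ℝ} (hF : MM m F) {A : Matrix (Fin d) (Fin d) ℝ}
    {c Amax ε : ℝ} (v : Fin d → ℝ)
    (hqc : ∀ᵐ ω ∂μ, vn (q ω) ≤ c) (hFA : ∀ᵐ ω ∂μ, ‖F ω‖ ≤ Amax)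
    (hmix : ∀ᵐ ω ∂μ, ‖(Matrix.of fun i k => (μ[fun ω' => F ω' i k | m0]) ω) - A‖ ≤ ε) :
    Integrable (fun ω => q ω ⬝ᵥ ((F ω - A) *ᵥ v)) μ ∧
    ∫ ω, q ω ⬝ᵥ ((F ω - A) *ᵥ v) ∂μ ≤ c * (ε * vn v) := by
  have iF : ∀ i k, Integrable (fun ω => F ω i k) μ := fun i k =>
    Integrable.of_bound (hF i k).aestronglyMeasurable Amax
      (hFA.mono fun ω hω => (entry_le _ _ _).trans hω)
  have iqF : ∀ i k, Integrable ((fun ω => q ω i) * (fun ω => F ω i k)) μ := fun i k => by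
    refine (iF i k).bdd_mul (c := c) ((hq i).mono hm le_rfl).aestronglyMeasurable ?_
    exact hqc.mono fun ω hω => (coord_le _ _).trans hω
  have iq : ∀ i, Integrable (fun ω => q ω i) μ := fun i =>
    Integrable.of_bound ((hq i).mono hm le_rfl).aestronglyMeasurable c
      (hqc.mono fun ω hω => (coord_le _ _).trans hω)
  have hpull : ∀ i k, μ[(fun ω => q ω i) * (fun ω => F ω i k) | m0] =ᵐ[μ]
      (fun ω => q ω i) * μ[fun ω' => F ω' i k | m0] := fun i k =>
    condExp_mul_of_stronglyMeasurable_left (hq i).stronglyMeasurable (iqF i k) (iF i k)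
  have iqE : ∀ i k, Integrable ((fun ω => q ω i) * μ[fun ω' => F ω' i k | m0]) μ := fun i k =>
    integrable_condExp.congr (hpull i k)
  have hIntg : ∀ i k, ∫ ω, q ω i * F ω i k ∂μ = ∫ ω, q ω i * (μ[fun ω' => F ω' i k | m0]) ω ∂μ := by
    intro i k
    have h1 := integral_condExp (μ := μ) hm (f := (fun ω => q ω i) * (fun ω => F ω i k))
    rw [integral_congr_ae (hpull i k)] at h1
    exact h1.symm
  have expand : ∀ (M : Ω → Matrix (Fin d) (Fin d) ℝ) ω, q ω ⬝ᵥ ((M ω - A) *ᵥ v) =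
      ∑ i, ∑ k, (q ω i * M ω i k * v k - q ω i * (A i k * v k)) := by
    intro M ω
    simp only [dotProduct, Matrix.mulVec, Matrix.sub_apply, Finset.mul_sum]
    refine Finset.sum_congr rfl fun i _ => Finset.sum_congr rfl fun k _ => by ring
  set Mc : Ω → Matrix (Fin d) (Fin d) ℝ :=
    fun ω => Matrix.of fun i k => (μ[fun ω' => F ω' i k | m0]) ω with hMc
  have int1 : ∀ i k, Integrable (fun ω => q ω i * F ω i k * v k - q ω i * (A i k * v k)) μ :=
    fun i k => ((iqF i k).mul_const _).sub ((iq i).mul_const _)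
  have int2 : ∀ i k, Integrable (fun ω => q ω i * Mc ω i k * v k - q ω i * (A i k * v k)) μ :=
    fun i k => ((iqE i k).mul_const _).sub ((iq i).mul_const _)
  have I1 : Integrable (fun ω => q ω ⬝ᵥ ((F ω - A) *ᵥ v)) μ := by
    simp only [expand F]
    exact integrable_finsetSum _ fun i _ => integrable_finsetSum _ fun k _ => int1 i k
  have I2 : Integrable (fun ω => q ω ⬝ᵥ ((Mc ω - A) *ᵥ v)) μ := by
    simp only [expand Mc]
    exact integrable_finsetSum _ fun i _ => integrable_finsetSum _ fun k _ => int2 i k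
  refine ⟨I1, ?_⟩
  have heq : ∫ ω, q ω ⬝ᵥ ((F ω - A) *ᵥ v) ∂μ = ∫ ω, q ω ⬝ᵥ ((Mc ω - A) *ᵥ v) ∂μ := by
    simp only [expand F, expand Mc]
    rw [integral_finsetSum _ fun i _ => integrable_finsetSum _ fun k _ => int1 i k,
      integral_finsetSum _ fun i _ => integrable_finsetSum _ fun k _ => int2 i k]
    refine Finset.sum_congr rfl fun i _ => ?_
    rw [integral_finsetSum _ fun k _ => int1 i k, integral_finsetSum _ fun k _ => int2 i k]
    refine Finset.sum_congr rfl fun k _ => ?_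
    have j1 : Integrable (fun ω => q ω i * F ω i k * v k) μ := (iqF i k).mul_const _
    have j2 : Integrable (fun ω => q ω i * Mc ω i k * v k) μ := (iqE i k).mul_const _
    have j3 : Integrable (fun ω => q ω i * (A i k * v k)) μ := (iq i).mul_const _
    rw [integral_sub j1 j3, integral_sub j2 j3]
    congr 1
    rw [integral_mul_const, integral_mul_const]
    congr 1
    exact hIntg i k
  rw [heq]
  calc _ ≤ ∫ _, c * (ε * vn v) ∂μ := by
        refine integral_mono_ae I2 (integrable_const _) ?_
        filter_upwards [hqc, hmix] with ω h1 h2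
        exact dot_mul_le _ _ _ h1 h2 le_rfl
    _ = _ := by simp

/-- second moment of the ergodic part -/
theorem erg_bound (𝓕 : Filtration ℕ m) {κ β Amax ε : ℝ} (hκ : 0 < κ) (hε : 0 < ε)
    {A : Matrix (Fin d) (Fin d) ℝ} (v : Fin d → ℝ)
    {G D F : ℕ → Ω → Matrix (Fin d) (Fin d) ℝ}
    (hGm : ∀ t, MM (𝓕 t) (G t)) (hDm : ∀ t, MM (𝓕 (t+1)) (D t)) (hFm : ∀ t, MM (𝓕 (t+1)) (F t))
    (hFA : ∀ t, ∀ᵐ ω ∂μ, ‖F t ω‖ ≤ Amax)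
    (hb : ∀ᵐ ω ∂μ, ∀ t : ℕ, ‖D t ω‖ ≤ κ / √(t + 1) ∧ ‖G t ω‖ ≤ κ / √(t + 1) ∧
      ‖D t ω - G t ω‖ ≤ κ / ((t + 1) * √(t + 1)) ∧
      ‖G (t+1) ω - G t ω‖ ≤ κ / ((t + 1) * √(t + 1)) ∧ vn ((F t ω - A) *ᵥ v) ≤ β)
    (hβ : 0 ≤ β)
    (τ : ℕ) (hτ : 1 ≤ τ)
    (hmix : ∀ t : ℕ, 1 ≤ t → ∀ᵐ ω ∂μ,
      ‖(Matrix.of fun i k => (μ[fun ω' => F (t + τ) ω' i k | 𝓕 t]) ω) - A‖ ≤ ε) (n : ℕ) :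
    (∀ t, MV (𝓕 t) (fun ω => Yseq (fun s => D s ω) (fun s => (F s ω - A) *ᵥ v) t)) ∧
    (∀ t, Integrable
      (fun ω => vn (Yseq (fun s => D s ω) (fun s => (F s ω - A) *ᵥ v) t) ^ 2) μ) ∧
    ∫ ω, vn (Yseq (fun s => D s ω) (fun s => (F s ω - A) *ᵥ v) (1 + n + τ)) ^ 2 ∂μ ≤
      (11 * (κ * β) ^ 2) * (τ * (1 + harmonic (n + 1))) + 4 * κ ^ 2 * β * vn v * ε * n := by
  set X : ℕ → Ω → Fin d → ℝ :=
    fun t ω => Yseq (fun s => D s ω) (fun s => (F s ω - A) *ᵥ v) t with hX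
  have hXm : ∀ t, MV (𝓕 t) (X t) := by
    intro t
    induction t with
    | zero => intro i; exact measurable_const
    | succ t ih =>
      exact (ih.mono (𝓕.mono (Nat.le_succ t))).add ((hDm t).mulVec
        (((hFm t).sub (MM.const A)).mulVec fun i => measurable_const))
  have hXb : ∀ᵐ ω ∂μ, ∀ t : ℕ, vn (X t ω) ≤ 2 * κ * β * √t := by
    filter_upwards [hb] with ω hω t
    exact Ybound hκ (fun t => (hω t).1) (fun t => (hω t).2.2.2.2) t
  have hXi : ∀ t, Integrable (fun ω => vn (X t ω) ^ 2) μ := by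
    intro t
    refine Integrable.of_bound ((hXm t).vn_sq.mono (𝓕.le t) le_rfl).aestronglyMeasurable
      ((2 * κ * β * √t) ^ 2) ?_
    filter_upwards [hXb] with ω hω
    rw [Real.norm_eq_abs, abs_of_nonneg (by positivity)]
    have := vn_nonneg (X t ω)
    gcongr; exact hω t
  refine ⟨hXm, hXi, ?_⟩
  have hτ' : (1:ℝ) ≤ τ := by exact_mod_cast hτ
  change ∫ ω, vn (X (1 + n + τ) ω) ^ 2 ∂μ ≤ _
  induction n with
  | zero =>
    have : ∫ ω, vn (X (1 + 0 + τ) ω) ^ 2 ∂μ ≤ ∫ _, (2 * κ * β) ^ 2 * (1 + τ) ∂μ := by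
      refine integral_mono_ae (hXi _) (integrable_const _) ?_
      filter_upwards [hXb] with ω hω
      have h0 := vn_nonneg (X (1 + 0 + τ) ω)
      calc vn (X (1 + 0 + τ) ω) ^ 2 ≤ (2 * κ * β * √((1 + 0 + τ : ℕ) : ℝ)) ^ 2 := by
            gcongr; exact hω _
        _ = _ := by
          rw [mul_pow, Real.sq_sqrt (by positivity)]; push_cast; ring
    refine this.trans ?_
    have hp : 0 ≤ (κ * β)^2 := by positivity
    simp [harmonic]
    nlinarith
  | succ n ih =>
    -- s = 1 + n
    have hst : ∀ᵐ ω ∂μ, vn (X (1 + n + τ + 1) ω) ^ 2 ≤ (vn (X (1 + n + τ) ω) ^ 2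
        + 2 * (((G (1 + n) ω)ᵀ *ᵥ X (1 + n) ω) ⬝ᵥ ((F (1 + n + τ) ω - A) *ᵥ v)))
        + 11 * (κ * β) ^ 2 * (τ / ((1 + n : ℕ) + 1)) := by
      filter_upwards [hb] with ω hω
      rw [← dot_mulVec_transpose]
      exact Ystep hκ (fun t => (hω t).1) (fun t => (hω t).2.1)
        (fun t => (hω t).2.2.1) (fun t => (hω t).2.2.2.1) (fun t => (hω t).2.2.2.2) (1 + n) τ hτ
    have hqc : ∀ᵐ ω ∂μ, vn ((G (1 + n) ω)ᵀ *ᵥ X (1 + n) ω) ≤ 2 * κ ^ 2 * β := by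
      filter_upwards [hb, hXb] with ω hω hω'
      calc _ ≤ ‖(G (1 + n) ω)ᵀ‖ * vn (X (1 + n) ω) := vn_mulVec _ _
        _ ≤ κ / √((1 + n : ℕ) + 1) * (2 * κ * β * √((1 + n : ℕ) + 1)) := by
          rw [norm_transpose]
          refine mul_le_mul (hω _).2.1 ((hω' _).trans ?_) (vn_nonneg _) (by positivity)
          gcongr; linarith
        _ = _ := by field_simp
    obtain ⟨hI, hle⟩ := cond_step (μ := μ) (𝓕.le (1 + n))
      ((hGm (1 + n)).transpose.mulVec (hXm (1 + n))) ((hFm (1 + n + τ)).mono (𝓕.le _)) v hqc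
      (hFA _) (hmix (1 + n) (by omega))
    have e : 1 + (n + 1) + τ = 1 + n + τ + 1 := by ring
    rw [e]
    have hmain : ∫ ω, vn (X (1 + n + τ + 1) ω) ^ 2 ∂μ ≤ ∫ ω, vn (X (1 + n + τ) ω) ^ 2 ∂μ
        + 2 * ∫ ω, (((G (1 + n) ω)ᵀ *ᵥ X (1 + n) ω) ⬝ᵥ ((F (1 + n + τ) ω - A) *ᵥ v)) ∂μ
        + 11 * (κ * β) ^ 2 * (τ / ((1 + n : ℕ) + 1)) := by
      calc _ ≤ ∫ ω, ((vn (X (1 + n + τ) ω) ^ 2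
        + 2 * (((G (1 + n) ω)ᵀ *ᵥ X (1 + n) ω) ⬝ᵥ ((F (1 + n + τ) ω - A) *ᵥ v)))
        + 11 * (κ * β) ^ 2 * (τ / ((1 + n : ℕ) + 1))) ∂μ :=
            integral_mono_ae (hXi _) (((hXi _).add (hI.const_mul 2)).add (integrable_const _)) hst
        _ = _ := by
          have j1 : Integrable (fun ω => vn (X (1 + n + τ) ω) ^ 2 +
              2 * (((G (1 + n) ω)ᵀ *ᵥ X (1 + n) ω) ⬝ᵥ ((F (1 + n + τ) ω - A) *ᵥ v))) μ :=
            (hXi _).add (hI.const_mul 2)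
          rw [integral_add j1 (integrable_const _),
            integral_add (hXi _) (hI.const_mul 2), integral_const_mul]
          simp
    have hh : (harmonic (n + 1 + 1) : ℝ) = harmonic (n + 1) + 1 / ((1 + n : ℕ) + 1) := by
      rw [harmonic_succ]; push_cast; rw [one_div, add_comm (1:ℝ) n]
    rw [hh]
    push_cast at *
    have : (τ:ℝ) / (1 + n + 1) = τ * (1 / (1 + n + 1)) := by ring
    rw [this] at hmain
    nlinarith
end prob
end DekiAux

namespace DekiAux
open scoped Matrix.Norms.L2Operator
section prob
variable {Ω : Type*} {m : MeasurableSpace Ω} {μ : Measure Ω} [IsProbabilityMeasure μ] {d p : ℕ}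

/-- one step of the noise martingale -/
lemma noise_step {mg : MeasurableSpace Ω} (hmg : mg ≤ m)
    {N : Ω → Fin d → ℝ} {P : Ω → Matrix (Fin d) (Fin p) ℝ} {w : Ω → Fin p → ℝ}
    (hN : MV mg N) (hP : MM mg P) (hw : MV m w)
    (hind : Indep (MeasurableSpace.comap (fun ω (i : Fin p) => w ω i) inferInstance) mg μ)
    (hw0 : ∀ i, ∫ ω, w ω i ∂μ = 0) (hw2 : ∀ i, Integrable (fun ω => w ω i) μ)
    (hwi : Integrable (fun ω => vn (w ω) ^ 2) μ)
    (hNi : Integrable (fun ω => vn (N ω) ^ 2) μ) {c : ℝ} (hP' : ∀ᵐ ω ∂μ, ‖P ω‖ ≤ c) :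
    Integrable (fun ω => vn (N ω + P ω *ᵥ w ω) ^ 2) μ ∧
    ∫ ω, vn (N ω + P ω *ᵥ w ω) ^ 2 ∂μ ≤ ∫ ω, vn (N ω) ^ 2 ∂μ + c ^ 2 * ∫ ω, vn (w ω) ^ 2 ∂μ := by
  set q : Ω → Fin p → ℝ := fun ω => (P ω)ᵀ *ᵥ N ω with hq
  have hqm : MV mg q := hP.transpose.mulVec hN
  have hqi : ∀ i, Integrable (fun ω => q ω i) μ := by
    intro i
    refine Integrable.mono' ((hNi.add (integrable_const 1)).const_mul c)
      ((hqm i).mono hmg le_rfl).aestronglyMeasurable ?_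
    filter_upwards [hP'] with ω hω
    have hc : 0 ≤ c := (norm_nonneg _).trans hω
    calc |q ω i| ≤ vn (q ω) := coord_le _ _
      _ ≤ ‖(P ω)ᵀ‖ * vn (N ω) := vn_mulVec _ _
      _ ≤ c * (vn (N ω) ^ 2 + 1) := by
        rw [norm_transpose]
        refine mul_le_mul hω ?_ (vn_nonneg _) hc
        nlinarith [sq_nonneg (vn (N ω) - 1), vn_nonneg (N ω)]
  have hindf : ∀ i, IndepFun (fun ω => q ω i) (fun ω => w ω i) μ := by
    intro i
    rw [IndepFun_iff_Indep]
    refine indep_of_indep_of_le_left (indep_of_indep_of_le_right hind.symm ?_) ?_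
    · have : (fun ω => w ω i) = (fun x : Fin p → ℝ => x i) ∘ (fun ω (i : Fin p) => w ω i) := rfl
      rw [this, ← MeasurableSpace.comap_comp]
      exact MeasurableSpace.comap_mono (measurable_pi_apply i).comap_le
    · exact (hqm i).comap_le
  have hprod : ∀ i, Integrable (fun ω => q ω i * w ω i) μ := fun i =>
    (hindf i).integrable_mul (hqi i) (hw2 i)
  have hprod0 : ∀ i, ∫ ω, q ω i * w ω i ∂μ = 0 := by
    intro i
    have := (hindf i).integral_mul_eq_mul_integral (hqi i).aestronglyMeasurable
      (hw2 i).aestronglyMeasurable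
    rw [hw0, mul_zero] at this
    exact this
  have hdi : Integrable (fun ω => q ω ⬝ᵥ w ω) μ := by
    simp only [dotProduct]; exact integrable_finsetSum _ fun i _ => hprod i
  have hd0 : ∫ ω, q ω ⬝ᵥ w ω ∂μ = 0 := by
    simp only [dotProduct]
    rw [integral_finsetSum _ fun i _ => hprod i]
    simp [hprod0]
  have hPw : ∀ᵐ ω ∂μ, vn (P ω *ᵥ w ω) ^ 2 ≤ c ^ 2 * vn (w ω) ^ 2 := by
    filter_upwards [hP'] with ω hω
    have h0 := vn_nonneg (P ω *ᵥ w ω)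
    rw [← mul_pow]
    gcongr
    exact (vn_mulVec _ _).trans (mul_le_mul_of_nonneg_right hω (vn_nonneg _))
  have hPwi : Integrable (fun ω => vn (P ω *ᵥ w ω) ^ 2) μ := by
    refine Integrable.mono' (hwi.const_mul (c ^ 2))
      (((hP.mono hmg).mulVec hw).vn_sq).aestronglyMeasurable ?_
    filter_upwards [hPw] with ω hω
    rw [Real.norm_eq_abs, abs_of_nonneg (by positivity)]; exact hω
  have e : ∀ ω, vn (N ω + P ω *ᵥ w ω) ^ 2 =
      vn (N ω) ^ 2 + 2 * (q ω ⬝ᵥ w ω) + vn (P ω *ᵥ w ω) ^ 2 := by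
    intro ω
    have : q ω ⬝ᵥ w ω = N ω ⬝ᵥ (P ω *ᵥ w ω) := (dot_mulVec_transpose _ _ _).symm
    rw [this, vn_sq, vn_sq, vn_sq, add_dotProduct, dotProduct_add, dotProduct_add,
      dotProduct_comm (P ω *ᵥ w ω) (N ω)]
    ring
  simp only [e]
  have j1 : Integrable (fun ω => vn (N ω) ^ 2 + 2 * (q ω ⬝ᵥ w ω)) μ := hNi.add (hdi.const_mul 2)
  refine ⟨j1.add hPwi, ?_⟩
  rw [integral_add j1 hPwi, integral_add hNi (hdi.const_mul 2), integral_const_mul, hd0,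
    ← integral_const_mul (c ^ 2)]
  have := integral_mono_ae hPwi (hwi.const_mul (c ^ 2)) hPw
  linarith

lemma gauss_facts {w : Ω → Fin p → ℝ} (hw : MV m w) {Γ : Matrix (Fin p) (Fin p) ℝ}
    (hg : ∀ a : Fin p → ℝ, Measure.map (fun ω => ∑ i, a i * w ω i) μ =
        gaussianReal 0 (Real.toNNReal (a ⬝ᵥ (Γ *ᵥ a)))) :
    (∀ i, ∫ ω, w ω i ∂μ = 0) ∧ (∀ i, Integrable (fun ω => w ω i) μ) ∧
    Integrable (fun ω => vn (w ω) ^ 2) μ ∧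
    ∫ ω, vn (w ω) ^ 2 ∂μ = ∑ i : Fin p, ∫ x, x ^ 2 ∂(gaussianReal 0
      (Real.toNNReal ((Pi.single i 1 : Fin p → ℝ) ⬝ᵥ (Γ *ᵥ Pi.single i 1)))) := by
  have hmap : ∀ i, Measure.map (fun ω => w ω i) μ = gaussianReal 0
      (Real.toNNReal ((Pi.single i 1 : Fin p → ℝ) ⬝ᵥ (Γ *ᵥ Pi.single i 1))) := by
    intro i
    rw [← hg (Pi.single i 1)]
    congr 1
    ext ω
    simp [Pi.single_apply]
  have hml : ∀ i, MemLp (fun ω => w ω i) 2 μ := by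
    intro i
    have h1 : MemLp id 2 (Measure.map (fun ω => w ω i) μ) := by
      rw [hmap i]; exact memLp_id_gaussianReal' 2 (by simp)
    exact h1.comp_of_map (hw i).aemeasurable
  have hsq : ∀ i, Integrable (fun ω => w ω i ^ 2) μ := fun i => (hml i).integrable_sq
  have evn : ∀ ω, vn (w ω) ^ 2 = ∑ i, w ω i ^ 2 := fun ω => vn_sq' _
  refine ⟨fun i => ?_, fun i => (hml i).integrable (by norm_num), ?_, ?_⟩
  · have h1 : ∫ x, x ∂(Measure.map (fun ω => w ω i) μ) = ∫ ω, w ω i ∂μ :=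
      integral_map (hw i).aemeasurable aestronglyMeasurable_id
    rw [← h1, hmap i, integral_id_gaussianReal]
  · simp only [evn]; exact integrable_finsetSum _ fun i _ => hsq i
  · simp only [evn]
    rw [integral_finsetSum _ fun i _ => hsq i]
    refine Finset.sum_congr rfl fun i _ => ?_
    rw [← hmap i, integral_map (hw i).aemeasurable (by fun_prop)]

/-- second moment of the noise part -/
theorem noise_bound (𝓕 : Filtration ℕ m) {c W : ℝ}
    {D : ℕ → Ω → Matrix (Fin d) (Fin d) ℝ} {S : ℕ → Ω → Matrix (Fin p) (Fin d) ℝ}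
    {w : ℕ → Ω → Fin p → ℝ}
    (hS : ∀ t, MM (𝓕 t) (S t)) (hw : ∀ t, MV (𝓕 (t+1)) (w (t+1)))
    (hDm : ∀ t, MM (𝓕 t ⊔ MeasurableSpace.comap
        (fun ω (ik : Fin p × Fin d) => S (t+1) ω ik.1 ik.2) inferInstance) (D t))
    (hind : ∀ t, Indep (MeasurableSpace.comap (fun ω (i : Fin p) => w (t+1) ω i) inferInstance)
      (𝓕 t ⊔ MeasurableSpace.comap
        (fun ω (ik : Fin p × Fin d) => S (t+1) ω ik.1 ik.2) inferInstance) μ)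
    (hw0 : ∀ t i, ∫ ω, w (t+1) ω i ∂μ = 0) (hw2 : ∀ t i, Integrable (fun ω => w (t+1) ω i) μ)
    (hwi : ∀ t, Integrable (fun ω => vn (w (t+1) ω) ^ 2) μ)
    (hW : ∀ t, ∫ ω, vn (w (t+1) ω) ^ 2 ∂μ ≤ W)
    (hb : ∀ᵐ ω ∂μ, ∀ t : ℕ, ‖D t ω * (S (t+1) ω)ᵀ‖ ≤ c / √(t + 1)) (t : ℕ) :
    MV (𝓕 t) (fun ω => Yseq (fun s => D s ω) (fun s => (S (s+1) ω)ᵀ *ᵥ w (s+1) ω) t) ∧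
    Integrable
      (fun ω => vn (Yseq (fun s => D s ω) (fun s => (S (s+1) ω)ᵀ *ᵥ w (s+1) ω) t) ^ 2) μ ∧
    ∫ ω, vn (Yseq (fun s => D s ω) (fun s => (S (s+1) ω)ᵀ *ᵥ w (s+1) ω) t) ^ 2 ∂μ ≤
      c ^ 2 * W * harmonic t := by
  have hle : ∀ t, MeasurableSpace.comap
      (fun ω (ik : Fin p × Fin d) => S t ω ik.1 ik.2) inferInstance ≤ 𝓕 t := fun t =>
    Measurable.comap_le ((@measurable_pi_iff _ _ _ (𝓕 t) _ _).2 fun ik => hS t ik.1 ik.2)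
  have hle2 : ∀ t, 𝓕 t ⊔ MeasurableSpace.comap
        (fun ω (ik : Fin p × Fin d) => S (t+1) ω ik.1 ik.2) inferInstance ≤ 𝓕 (t+1) := fun t =>
    sup_le (𝓕.mono (Nat.le_succ t)) (hle (t+1))
  have hSm : ∀ t, MM (𝓕 t ⊔ MeasurableSpace.comap
        (fun ω (ik : Fin p × Fin d) => S (t+1) ω ik.1 ik.2) inferInstance) (S (t+1)) := by
    intro t i k
    have : Measurable[MeasurableSpace.comap
        (fun ω (ik : Fin p × Fin d) => S (t+1) ω ik.1 ik.2) inferInstance]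
        (fun ω => S (t+1) ω i k) :=
      (measurable_pi_apply (i, k)).comp (comap_measurable
        (fun ω (ik : Fin p × Fin d) => S (t+1) ω ik.1 ik.2))
    exact this.mono le_sup_right le_rfl
  induction t with
  | zero =>
    refine ⟨fun i => measurable_const, ?_, ?_⟩
    · simp [Yseq, vn_zero]
    · simp [Yseq, vn_zero]
  | succ t ih =>
    obtain ⟨i1, i2, i3⟩ := ih
    have e : ∀ ω, Yseq (fun s => D s ω) (fun s => (S (s+1) ω)ᵀ *ᵥ w (s+1) ω) (t+1) =
      Yseq (fun s => D s ω) (fun s => (S (s+1) ω)ᵀ *ᵥ w (s+1) ω) t +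
        (D t ω * (S (t+1) ω)ᵀ) *ᵥ w (t+1) ω := by
      intro ω
      rw [← Matrix.mulVec_mulVec]; rfl
    have hPm := (hDm t).mul (hSm t).transpose
    obtain ⟨k1, k2⟩ := noise_step (μ := μ) ((hle2 t).trans (𝓕.le _)) (i1.mono le_sup_left) hPm
      ((hw t).mono (𝓕.le _)) (hind t) (hw0 t) (hw2 t) (hwi t) i2 (hb.mono fun ω h => h t)
    simp only [e]
    refine ⟨(i1.mono (𝓕.mono (Nat.le_succ t))).add ((hPm.mono (hle2 t)).mulVec (hw t)), k1, ?_⟩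
    refine k2.trans ?_
    have : (c / √((t:ℝ) + 1)) ^ 2 * ∫ ω, vn (w (t+1) ω) ^ 2 ∂μ ≤ (c / √((t:ℝ) + 1)) ^ 2 * W := by
      gcongr; exact hW t
    rw [div_pow, Real.sq_sqrt (by positivity)] at *
    rw [harmonic_succ]; push_cast
    calc _ ≤ c ^ 2 * W * harmonic t + c ^ 2 / (t + 1) * W := by linarith
      _ = _ := by rw [div_eq_mul_inv]; ring
end prob
end DekiAux

namespace DekiAux
open scoped Matrix.Norms.L2Operator
section alg
variable {d p J : ℕ}

lemma ensMean_upd (hJ : 0 < J) {z z' : Fin J → Fin d → ℝ} (Q : Matrix (Fin d) (Fin d) ℝ)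
    (b : Fin d → ℝ) (hz : ∀ j, z' j = Q *ᵥ z j + b) :
    ensMean J z' = Q *ᵥ ensMean J z + b := by
  have hJ' : (J : ℝ) ≠ 0 := by positivity
  unfold ensMean
  rw [Finset.sum_congr rfl fun j _ => hz j, Finset.sum_add_distrib, smul_add, mulVec_smul,
    Matrix.mulVec_sum]
  congr 1
  simp [← Nat.cast_smul_eq_nsmul ℝ, smul_smul, hJ']

lemma ensSpread_upd (hJ : 0 < J) {z z' : Fin J → Fin d → ℝ} (Q : Matrix (Fin d) (Fin d) ℝ)
    (b : Fin d → ℝ) (hz : ∀ j, z' j = Q *ᵥ z j + b) (j : Fin J) :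
    ensSpread J z' j = Q *ᵥ ensSpread J z j := by
  unfold ensSpread
  rw [ensMean_upd hJ Q b hz, hz, mulVec_sub]
  abel

lemma ensCov_upd (hJ : 0 < J) {z z' : Fin J → Fin d → ℝ} (Q : Matrix (Fin d) (Fin d) ℝ)
    (b : Fin d → ℝ) (hz : ∀ j, z' j = Q *ᵥ z j + b) :
    ensCov J z' = Q * ensCov J z * Qᵀ := by
  unfold ensCov
  rw [Matrix.mul_smul, Matrix.smul_mul, Matrix.mul_sum, Matrix.sum_mul]
  congr 1
  refine Finset.sum_congr rfl fun j _ => ?_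
  rw [ensSpread_upd hJ Q b hz, Matrix.mul_vecMulVec, Matrix.vecMulVec_mul, Matrix.vecMul_transpose]

lemma ensCov_psd (z : Fin J → Fin d → ℝ) : (ensCov J z).PosSemidef := by
  unfold ensCov
  refine Matrix.PosSemidef.smul (Matrix.posSemidef_sum _ fun j _ => ?_) (by positivity)
  simpa using Matrix.posSemidef_vecMulVec_self_star (ensSpread J z j)

lemma ensCov_quad (z : Fin J → Fin d → ℝ) (x : Fin d → ℝ) :
    x ⬝ᵥ (ensCov J z *ᵥ x) ≤ ensEnergy J z * vn x ^ 2 := by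
  unfold ensCov ensEnergy
  rw [smul_mulVec, dotProduct_smul, smul_eq_mul, mul_assoc, Matrix.sum_mulVec, dotProduct_sum,
    Finset.sum_mul]
  refine mul_le_mul_of_nonneg_left (Finset.sum_le_sum fun j _ => ?_) (by positivity)
  rw [Matrix.vecMulVec_mulVec, ← vn_sq' (ensSpread J z j)]
  have h1 := dot_le (ensSpread J z j) x
  have : x ⬝ᵥ (MulOpposite.op (ensSpread J z j ⬝ᵥ x) • ensSpread J z j)
      = (ensSpread J z j ⬝ᵥ x) ^ 2 := by
    rw [op_smul_eq_smul, dotProduct_smul, smul_eq_mul, dotProduct_comm x]; ring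
  rw [this, ← mul_pow, ← sq_abs]
  gcongr

lemma smul_energy {h α L E Jr : ℝ} (hα : 0 < α) (hh : 0 < h) (hL : 0 < L) (hJ : 1 ≤ Jr) (hE : 0 < E)
    (hs : h ≤ min (α / (Jr * L ^ 2)) (Jr / α) * E⁻¹) : E ≤ α / (h * L ^ 2) := by
  have h1 : h ≤ α / (Jr * L ^ 2) * E⁻¹ :=
    hs.trans (mul_le_mul_of_nonneg_right (min_le_left _ _) (by positivity))
  have h2 : h ≤ α / L ^ 2 * E⁻¹ := by
    refine h1.trans (mul_le_mul_of_nonneg_right ?_ (by positivity))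
    gcongr
    nlinarith [sq_nonneg L]
  rw [← div_eq_mul_inv, le_div_iff₀ hE, le_div_iff₀ (by positivity)] at h2
  rw [le_div_iff₀ (by positivity)]
  linarith

lemma good_of {h α Amax σ : ℝ} (hα : 0 < α) (hh : 0 < h) (hA : 0 < Amax) (hJ : 0 < J)
    {z : Fin J → Fin d → ℝ} {S : ℕ → Matrix (Fin p) (Fin d) ℝ}
    (hC : (ensCov J z - σ • (1 : Matrix (Fin d) (Fin d) ℝ)).PosSemidef)
    (hE : 0 < ensEnergy J z)
    (hs : h ≤ min (α / ((J:ℝ) * (Amax + α)^2)) ((J:ℝ)/α) * (ensEnergy J z)⁻¹)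
    (hS : ∀ t, opNorm ((S t)ᵀ * S t) ≤ Amax) :
    Good h α Amax σ (ensCov J z) (fun t => (S (t+1))ᵀ * S (t+1)) where
  hC := ensCov_psd z
  hlow x := by
    have := hC.dotProduct_mulVec_nonneg x
    rw [star_trivial, sub_mulVec, smul_mulVec, one_mulVec, dotProduct_sub, dotProduct_smul,
      smul_eq_mul, ← vn_sq] at this
    linarith
  hup x := (ensCov_quad z x).trans (mul_le_mul_of_nonneg_right
    (smul_energy hα hh (by positivity) (by exact_mod_cast hJ) hE hs) (by positivity))
  hB t := by
    simpa using Matrix.posSemidef_conjTranspose_mul_self (S (t+1))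
  hBn t := hS (t+1)

lemma norm_S {S : Matrix (Fin p) (Fin d) ℝ} {a : ℝ} (hS : opNorm (Sᵀ * S) ≤ a) :
    ‖Sᵀ‖ ≤ √a := by
  rw [norm_transpose]
  have h1 := Matrix.l2_opNorm_conjTranspose_mul_self S
  rw [opNorm_eq] at hS
  rw [show Sᴴ = Sᵀ by simp] at h1
  rw [h1] at hS
  exact Real.le_sqrt_of_sq_le (by nlinarith)

/-- optimality of the Tikhonov minimizer -/
lemma opt_eq {A : Matrix (Fin d) (Fin d) ℝ} (hA : A.PosDef) {α : ℝ} (hα : 0 < α)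
    (zs : Fin d → ℝ) : A *ᵥ (limOpt A α zs - zs) + α • limOpt A α zs = 0 := by
  have h1 : (A + α • (1 : Matrix (Fin d) (Fin d) ℝ)).PosDef :=
    hA.add_posSemidef (Matrix.PosSemidef.one.smul hα.le)
  have h2 : (A + α • (1 : Matrix (Fin d) (Fin d) ℝ)) *ᵥ limOpt A α zs = A *ᵥ zs := by
    unfold limOpt
    rw [mulVec_mulVec, Matrix.mul_nonsing_inv _ (h1.isUnit.map Matrix.detMonoidHom), one_mulVec]
  rw [add_mulVec, smul_mulVec, one_mulVec] at h2
  rw [mulVec_sub, sub_add_eq_add_sub, h2, sub_self]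

lemma obj_le {A : Matrix (Fin d) (Fin d) ℝ} (hA : A.PosDef)
    (hA1 : ((1 : Matrix (Fin d) (Fin d) ℝ) - A).PosSemidef) {α : ℝ} (hα : 0 < α)
    (zs z : Fin d → ℝ) : 0 ≤ limObj A α zs z ∧
    limObj A α zs z ≤ limObj A α zs (limOpt A α zs) +
      (1/2) * (1 + α) * vn (z - limOpt A α zs) ^ 2 := by
  have h0 := opt_eq hA hα zs
  set o := limOpt A α zs
  have hAt : Aᵀ = A := by simpa using hA.isHermitian.eq
  constructor
  · unfold limObj
    have := hA.posSemidef.dotProduct_mulVec_nonneg (z - zs)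
    rw [star_trivial] at this
    rw [← vn_sq' z]; positivity
  · obtain ⟨n, rfl⟩ : ∃ n, z = o + n := ⟨z - o, by simp⟩
    have h1 := hA1.dotProduct_mulVec_nonneg n
    rw [star_trivial, sub_mulVec, one_mulVec, dotProduct_sub, ← vn_sq] at h1
    have h3 : n ⬝ᵥ (A *ᵥ (o - zs)) + α * (n ⬝ᵥ o) = 0 := by
      rw [← smul_eq_mul, ← dotProduct_smul, ← dotProduct_add, h0, dotProduct_zero]
    have h4 : (o - zs) ⬝ᵥ (A *ᵥ n) = n ⬝ᵥ (A *ᵥ (o - zs)) := by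
      rw [dot_mulVec_transpose, hAt, dotProduct_comm]
    unfold limObj
    rw [← vn_sq', ← vn_sq', add_sub_cancel_left, vn_sq (o + n), vn_sq o,
      show o + n - zs = (o - zs) + n by abel, mulVec_add, add_dotProduct, dotProduct_add,
      dotProduct_add, h4, add_dotProduct, dotProduct_add, dotProduct_add, ← vn_sq n,
      dotProduct_comm o n]
    nlinarith

end alg
end DekiAux

namespace DekiAux
open scoped Matrix.Norms.L2Operator
section dyn
variable {d p J : ℕ}

/-- the ensemble covariance and the mean deviation along one trajectory -/
lemma traj (hJ : 0 < J) {h α : ℝ} {A : Matrix (Fin d) (Fin d) ℝ} (hA : A.PosDef) (hα : 0 < α)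
    {zs : Fin d → ℝ} {S : ℕ → Matrix (Fin p) (Fin d) ℝ} {w u : ℕ → Fin p → ℝ}
    {z : ℕ → Fin J → Fin d → ℝ}
    (hu : ∀ t : ℕ, u t = S t *ᵥ zs + w t)
    (hupd : ∀ (t : ℕ) (j : Fin J), z (t+1) j = z t j -
      h • ((ensCov J (z t)) *ᵥ ((S (t+1))ᵀ *ᵥ (S (t+1) *ᵥ (z t j) - u (t+1)) + α • z t j))) (t : ℕ) :
    ensMean J (z (t+1)) - limOpt A α zs =
      (1 - h • (Cseq h α (ensCov J (z 0)) (fun t => (S (t+1))ᵀ * S (t+1)) t *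
          ((S (t+1))ᵀ * S (t+1) + α • 1))) *ᵥ (ensMean J (z t) - limOpt A α zs)
      - h • (Cseq h α (ensCov J (z 0)) (fun t => (S (t+1))ᵀ * S (t+1)) t *ᵥ
          (((S (t+1))ᵀ * S (t+1) - A) *ᵥ (limOpt A α zs - zs) - (S (t+1))ᵀ *ᵥ w (t+1))) := by
  have key : ∀ t j, z (t+1) j =
      (1 - h • (ensCov J (z t) * ((S (t+1))ᵀ * S (t+1) + α • 1))) *ᵥ z t j +
        h • (ensCov J (z t) *ᵥ ((S (t+1))ᵀ *ᵥ u (t+1))) := by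
    intro t j
    rw [hupd, sub_mulVec, one_mulVec, smul_mulVec, ← mulVec_mulVec, add_mulVec, smul_mulVec,
      one_mulVec, ← mulVec_mulVec, mulVec_sub, sub_add_eq_add_sub, mulVec_sub, smul_sub]
    abel
  have hC : ∀ t, ensCov J (z t) = Cseq h α (ensCov J (z 0)) (fun t => (S (t+1))ᵀ * S (t+1)) t := by
    intro t
    induction t with
    | zero => simp [Cseq, Mseq]
    | succ t ih => rw [ensCov_upd hJ _ _ (key t), Cseq_succ, ih]
  rw [ensMean_upd hJ _ _ (key t), hC]
  generalize Cseq h α (ensCov J (z 0)) (fun t => (S (t+1))ᵀ * S (t+1)) t = C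
  have h0 := opt_eq hA hα zs
  rw [hu]
  set o := limOpt A α zs
  generalize ensMean J (z t) = zb
  generalize S (t+1) = s
  have h1 : A *ᵥ (o - zs) = - (α • o) := eq_neg_of_add_eq_zero_left h0
  have e1 : (sᵀ * s - A) *ᵥ (o - zs) - sᵀ *ᵥ w (t+1) =
      (sᵀ * s + α • 1) *ᵥ o - sᵀ *ᵥ (s *ᵥ zs + w (t+1)) := by
    rw [sub_mulVec, h1, add_mulVec, smul_mulVec, one_mulVec, mulVec_sub, mulVec_add, mulVec_mulVec]
    abel
  rw [e1, mulVec_sub _ zb o, sub_mulVec _ _ o, one_mulVec, smul_mulVec _ _ o, mulVec_sub C,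
    smul_sub]
  simp only [mulVec_mulVec]
  abel

end dyn
section meas
variable {Ω : Type*} {m : MeasurableSpace Ω} {d p J : ℕ}

lemma MV.sub {n : ℕ} {x y : Ω → Fin n → ℝ} (hx : MV m x) (hy : MV m y) :
    MV m (fun ω => x ω - y ω) := fun i => (hx i).sub (hy i)

lemma MV.smul {n : ℕ} {x : Ω → Fin n → ℝ} (c : ℝ) (hx : MV m x) :
    MV m (fun ω => c • x ω) := fun i => (hx i).const_mul c

lemma mean_meas {z : Ω → Fin J → Fin d → ℝ} (hz : ∀ j i, Measurable[m] fun ω => z ω j i) :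
    MV m (fun ω => ensMean J (z ω)) := by
  intro i
  simp only [ensMean, Pi.smul_apply, Finset.sum_apply, smul_eq_mul]
  exact (Finset.measurable_sum _ fun j _ => hz j i).const_mul _

lemma cov_meas {z : Ω → Fin J → Fin d → ℝ} (hz : ∀ j i, Measurable[m] fun ω => z ω j i) :
    MM m (fun ω => ensCov J (z ω)) := by
  intro i k
  simp only [ensCov, Matrix.smul_apply, Matrix.sum_apply, smul_eq_mul, vecMulVec_apply, ensSpread,
    Pi.sub_apply]
  exact (Finset.measurable_sum _ fun j _ => ((hz j i).sub (mean_meas hz i)).mul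
    ((hz j k).sub (mean_meas hz k))).const_mul _

lemma seq_meas (𝓕 : Filtration ℕ m) {h α : ℝ} {C0 : Ω → Matrix (Fin d) (Fin d) ℝ}
    {B : ℕ → Ω → Matrix (Fin d) (Fin d) ℝ} (hC : MM (𝓕 0) C0) (hB : ∀ t, MM (𝓕 (t+1)) (B t)) (t : ℕ) :
    MM (𝓕 t) (fun ω => Mseq h α (C0 ω) (fun s => B s ω) t) := by
  induction t with
  | zero => exact MM.const 1
  | succ t ih =>
    have ih' := ih.mono (𝓕.mono (Nat.le_succ t))
    have hC' := hC.mono (𝓕.mono (Nat.zero_le (t+1)))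
    exact ((MM.const 1).sub (MM.smul h (((ih'.mul hC').mul ih'.transpose).mul
      ((hB t).add (MM.const (α • 1)))))).mul ih'

lemma G_meas (𝓕 : Filtration ℕ m) {h α : ℝ} {C0 : Ω → Matrix (Fin d) (Fin d) ℝ}
    {B : ℕ → Ω → Matrix (Fin d) (Fin d) ℝ} (hC : MM (𝓕 0) C0) (hB : ∀ t, MM (𝓕 (t+1)) (B t)) (t : ℕ) :
    MM (𝓕 t) (fun ω => Gseq h α (C0 ω) (fun s => B s ω) t) :=
  (hC.mono (𝓕.mono (Nat.zero_le t))).mul (seq_meas 𝓕 hC hB t).transpose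

lemma D_meas (𝓕 : Filtration ℕ m) {h α : ℝ} {C0 : Ω → Matrix (Fin d) (Fin d) ℝ}
    {B : ℕ → Ω → Matrix (Fin d) (Fin d) ℝ} (hC : MM (𝓕 0) C0) (hB : ∀ t, MM (𝓕 (t+1)) (B t)) (t : ℕ)
    {mg : MeasurableSpace Ω} (h1 : 𝓕 t ≤ mg) (hBt : MM mg (B t)) :
    MM mg (fun ω => Gseq h α (C0 ω) (fun s => B s ω) t * Rseq h α (C0 ω) (fun s => B s ω) t) := by
  have hM := (seq_meas (h := h) (α := α) 𝓕 hC hB t).mono h1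
  have hC' := (hC.mono (𝓕.mono (Nat.zero_le t))).mono h1
  have hG := (G_meas (h := h) (α := α) 𝓕 hC hB t).mono h1
  exact hG.mul ((MM.const 1).sub (MM.smul h ((hBt.add (MM.const (α • 1))).mul
    ((hM.mul hC').mul hM.transpose)))).inv

lemma mean_int {μ : Measure Ω} [IsProbabilityMeasure μ] {z : Ω → Fin J → Fin d → ℝ}
    (hz : ∀ j i, Measurable[m] fun ω => z ω j i)
    (hi : ∀ j : Fin J, Integrable (fun ω => enormSq (z ω j)) μ) (o : Fin d → ℝ) :
    Integrable (fun ω => vn (ensMean J (z ω) - o) ^ 2) μ := by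
  have h2 : ∀ j i, MemLp (fun ω => z ω j i) 2 μ := by
    intro j i
    rw [memLp_two_iff_integrable_sq (hz j i).aestronglyMeasurable]
    refine Integrable.mono' (hi j) ((hz j i).pow_const 2).aestronglyMeasurable ?_
    refine Filter.Eventually.of_forall fun ω => ?_
    rw [Real.norm_eq_abs, abs_of_nonneg (by positivity)]
    exact Finset.single_le_sum (f := fun i => z ω j i ^ 2) (fun i _ => sq_nonneg _)
      (Finset.mem_univ i)
  simp only [vn_sq', enormSq]
  refine integrable_finsetSum _ fun i _ => ?_
  have : MemLp (fun ω => (ensMean J (z ω) - o) i) 2 μ := by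
    simp only [ensMean, Pi.smul_apply, Finset.sum_apply, smul_eq_mul, Pi.sub_apply]
    exact ((memLp_finsetSum _ fun j _ => h2 j i).const_mul _).sub (memLp_const _)
  exact this.integrable_sq

end meas

lemma final_arith {K0 K1 K2 K3 ε lam : ℝ} (h0 : 0 ≤ K0) (h1 : 0 ≤ K1) (h2 : 0 ≤ K2) (h3 : 0 ≤ K3)
    (hε : 0 < ε) (hl : lam < 1) {τ n T : ℕ} (hτ : 1 ≤ τ) (hT : T = 1 + n + τ) :
    (K0 + (K1 * (τ * (1 + harmonic (n + 1))) + K2 * ε * n) + K3 * harmonic T) / ((T:ℝ) + 1) ≤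
    (K0 + 2 * K1 + K2 + K3) * (ε + (1 + (τ:ℝ) * (1 + Real.log τ + Real.log T)) / (T:ℝ) ^ lam) := by
  have hτ' : (1:ℝ) ≤ τ := by exact_mod_cast hτ
  have hT1 : (1:ℝ) ≤ T := by exact_mod_cast (by omega : 1 ≤ T)
  have hnT : (n:ℝ) ≤ T := by exact_mod_cast (by omega : n ≤ T)
  have hlτ : 0 ≤ Real.log τ := Real.log_nonneg hτ'
  have hlT : 0 ≤ Real.log T := Real.log_nonneg hT1
  have hH1 : (harmonic (n+1) : ℝ) ≤ 1 + Real.log T := by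
    refine (harmonic_le_one_add_log (n+1)).trans ?_
    have : Real.log ((n+1 : ℕ):ℝ) ≤ Real.log T :=
      Real.log_le_log (by positivity) (by exact_mod_cast (by omega : n + 1 ≤ T))
    linarith
  have hH2 : (harmonic T : ℝ) ≤ 1 + Real.log T := harmonic_le_one_add_log T
  set Lg := Real.log T
  set P := 1 + (τ:ℝ) * (1 + Real.log τ + Lg) with hP
  have hP1 : 1 ≤ P := by rw [hP]; have : 0 ≤ (τ:ℝ) * (1 + Real.log τ + Lg) := by positivity
                         linarith
  have hτl : (τ:ℝ) * (1 + Lg) ≤ P := by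
    rw [hP]; nlinarith [mul_nonneg (by linarith : (0:ℝ) ≤ τ) hlτ]
  have hPL : 1 + Lg ≤ P := by nlinarith
  have e1 : (τ:ℝ) * (1 + harmonic (n+1)) ≤ 2 * P := by
    have : (τ:ℝ) * (1 + harmonic (n+1)) ≤ τ * (2 * (1 + Lg)) := by gcongr; linarith
    linarith
  have hpow : (T:ℝ) ^ lam ≤ T + 1 := by
    have := Real.rpow_le_rpow_of_exponent_le hT1 hl.le
    rw [Real.rpow_one] at this; linarith
  have hpow0 : 0 < (T:ℝ) ^ lam := by positivity
  calc _ ≤ (K0 * P + (K1 * (2 * P) + K2 * ε * (T + 1)) + K3 * P) / ((T:ℝ) + 1) := by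
        gcongr
        · nlinarith
        · linarith
        · linarith
    _ = (K0 + 2 * K1 + K3) * (P / (T + 1)) + K2 * ε := by field_simp; ring
    _ ≤ (K0 + 2 * K1 + K3) * (P / (T:ℝ) ^ lam) + K2 * ε := by gcongr
    _ ≤ _ := by
      have : 0 ≤ P / (T:ℝ) ^ lam := by positivity
      nlinarith [mul_nonneg h2 this, mul_nonneg h0 hε.le, mul_nonneg h1 hε.le, mul_nonneg h3 hε.le]

end DekiAux

namespace DekiAux
open scoped Matrix.Norms.L2Operator
set_option maxHeartbeats 1000000 in
theorem main_aux 
    {d p J : ℕ} (hd : 0 < d) (hJ : 0 < J)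
    {Ω : Type*} {m : MeasurableSpace Ω} (μ : Measure Ω) [IsProbabilityMeasure μ]
    (𝓕 : Filtration ℕ m)
    (α h Amax σl : ℝ) (hα : 0 < α) (hh : 0 < h) (hAmax : 0 < Amax)
    (hlam : 2 * α * σl < 1)
    (A : Matrix (Fin d) (Fin d) ℝ) (hA_pd : A.PosDef)
    (hA_le_one : ((1 : Matrix (Fin d) (Fin d) ℝ) - A).PosSemidef)
    (zstar : Fin d → ℝ)
    (Γ : Matrix (Fin p) (Fin p) ℝ)
    (S : ℕ → Ω → Matrix (Fin p) (Fin d) ℝ)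
    (w : ℕ → Ω → Fin p → ℝ) (u : ℕ → Ω → Fin p → ℝ)
    (z : ℕ → Ω → Fin J → Fin d → ℝ)
    -- the observation operators are adapted and uniformly bounded
    (hS_adapted : ∀ (t : ℕ) i k, Measurable[𝓕 t] fun ω => S t ω i k)
    (hS_bound : ∀ t : ℕ, ∀ᵐ ω ∂μ, opNorm ((S t ω)ᵀ * (S t ω)) ≤ Amax)
    -- the noise is i.i.d. centered Gaussian with covariance Γ, adapted and
    -- independent of the past and of the current observation operator
    (hw_meas : ∀ (t : ℕ) i, Measurable[𝓕 (t+1)] fun ω => w (t+1) ω i)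
    (hw_gauss : ∀ (t : ℕ) (a : Fin p → ℝ),
      Measure.map (fun ω => ∑ i, a i * w t ω i) μ =
        ProbabilityTheory.gaussianReal 0 (Real.toNNReal (a ⬝ᵥ (Γ *ᵥ a))))
    (hw_indep : ∀ t : ℕ, ProbabilityTheory.Indep
      (MeasurableSpace.comap (fun ω (i : Fin p) => w (t+1) ω i) inferInstance)
      (𝓕 t ⊔ MeasurableSpace.comap
        (fun ω (ik : Fin p × Fin d) => S (t+1) ω ik.1 ik.2) inferInstance) μ)
    -- observations and DEKI dynamics
    (hu : ∀ (t : ℕ) ω, u t ω = (S t ω) *ᵥ zstar + w t ω)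
    (hupd : ∀ (t : ℕ) ω (j : Fin J), z (t+1) ω j = z t ω j -
      h • ((ensCov J (z t ω)) *ᵥ
        ((S (t+1) ω)ᵀ *ᵥ ((S (t+1) ω) *ᵥ (z t ω j) - u (t+1) ω) + α • z t ω j)))
    -- initial ensemble: 𝓕₀-measurable, square-integrable, C₀ ⪰ σₗ I a.s.,
    -- E₀ > 0 a.s. and step-size condition a.s.
    (hz0_meas : ∀ (j : Fin J) i, Measurable[𝓕 0] fun ω => z 0 ω j i)
    (hz0_int : ∀ j : Fin J, Integrable (fun ω => enormSq (z 0 ω j)) μ)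
    (hC0 : ∀ᵐ ω ∂μ,
      (ensCov J (z 0 ω) - σl • (1 : Matrix (Fin d) (Fin d) ℝ)).PosSemidef)
    (hE0 : ∀ᵐ ω ∂μ, 0 < ensEnergy J (z 0 ω))
    (hstep : ∀ᵐ ω ∂μ, h ≤
      min (α / ((J:ℝ) * (Amax + α)^2)) ((J:ℝ)/α) * (ensEnergy J (z 0 ω))⁻¹) 
    (κ : ℝ) (hκ : 0 < κ)
    (hdet : ∀ (C0 : Matrix (Fin d) (Fin d) ℝ) (B : ℕ → Matrix (Fin d) (Fin d) ℝ),
      Good h α Amax σl C0 B → ∀ t : ℕ,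
      ‖Mseq h α C0 B t‖ ≤ κ / √(t + 1) ∧ ‖Gseq h α C0 B t‖ ≤ κ / √(t + 1) ∧
      ‖Gseq h α C0 B t * Rseq h α C0 B t‖ ≤ κ / √(t + 1) ∧
      ‖Gseq h α C0 B t * Rseq h α C0 B t - Gseq h α C0 B t‖ ≤ κ / ((t + 1) * √(t + 1)) ∧
      ‖Gseq h α C0 B (t + 1) - Gseq h α C0 B t‖ ≤ κ / ((t + 1) * √(t + 1)) ∧
      (1 - h • ((B t + α • 1) * Cseq h α C0 B t)) * Rseq h α C0 B t = 1) :
    ∃ C > 0, ∀ ε > 0, ∀ τ : ℕ, 1 ≤ τ →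
      (∀ t : ℕ, 1 ≤ t → ∀ᵐ ω ∂μ,
        opNorm ((Matrix.of fun i k =>
          (μ[fun ω' => ((S (t+1+τ) ω')ᵀ * (S (t+1+τ) ω')) i k | 𝓕 t]) ω) - A) ≤ ε) →
      ∀ T : ℕ, τ + 1 ≤ T →
        (∫ ω, limObj A α zstar (ensMean J (z T ω)) ∂μ) - limObj A α zstar (limOpt A α zstar) ≤
          C * (ε + (1 + (τ:ℝ) * (1 + Real.log τ + Real.log T)) / (T:ℝ) ^ (2 * α * σl)) := by
  have hS_all : ∀ᵐ ω ∂μ, ∀ t, opNorm ((S t ω)ᵀ * S t ω) ≤ Amax := ae_all_iff.2 hS_bound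
  have hgood : ∀ᵐ ω ∂μ, Good h α Amax σl (ensCov J (z 0 ω))
      (fun t => (S (t+1) ω)ᵀ * S (t+1) ω) := by
    filter_upwards [hS_all, hC0, hE0, hstep] with ω h1 h2 h3 h4
    exact good_of hα hh hAmax hJ h2 h3 h4 h1
  set B : ℕ → Ω → Matrix (Fin d) (Fin d) ℝ := fun t ω => (S (t+1) ω)ᵀ * S (t+1) ω with hBdef
  set G : ℕ → Ω → Matrix (Fin d) (Fin d) ℝ :=
    fun t ω => Gseq h α (ensCov J (z 0 ω)) (fun s => B s ω) t with hGdef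
  set D : ℕ → Ω → Matrix (Fin d) (Fin d) ℝ :=
    fun t ω => Gseq h α (ensCov J (z 0 ω)) (fun s => B s ω) t *
      Rseq h α (ensCov J (z 0 ω)) (fun s => B s ω) t with hDdef
  set o := limOpt A α zstar with ho
  set v := o - zstar with hv
  set β := (Amax + ‖A‖) * vn v with hβdef
  have hβ : 0 ≤ β := mul_nonneg (by positivity) (vn_nonneg _)
  have hSm : ∀ t, MM (𝓕 t) (S t) := fun t i k => hS_adapted t i k
  have hBm : ∀ t, MM (𝓕 (t+1)) (B t) := fun t => (hSm (t+1)).transpose.mul (hSm (t+1))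
  have hCm : MM (𝓕 0) (fun ω => ensCov J (z 0 ω)) := cov_meas hz0_meas
  have hSm' : ∀ t, MM (𝓕 t ⊔ MeasurableSpace.comap
        (fun ω (ik : Fin p × Fin d) => S (t+1) ω ik.1 ik.2) inferInstance) (S (t+1)) := by
    intro t i k
    have : Measurable[MeasurableSpace.comap
        (fun ω (ik : Fin p × Fin d) => S (t+1) ω ik.1 ik.2) inferInstance]
        (fun ω => S (t+1) ω i k) :=
      (measurable_pi_apply (i, k)).comp (comap_measurable
        (fun ω (ik : Fin p × Fin d) => S (t+1) ω ik.1 ik.2))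
    exact this.mono le_sup_right le_rfl
  have hGm : ∀ t, MM (𝓕 t) (G t) := fun t => G_meas 𝓕 hCm hBm t
  have hDm : ∀ t, MM (𝓕 (t+1)) (D t) := fun t =>
    D_meas 𝓕 hCm hBm t (𝓕.mono (Nat.le_succ t)) (hBm t)
  have hDm' : ∀ t, MM (𝓕 t ⊔ MeasurableSpace.comap
        (fun ω (ik : Fin p × Fin d) => S (t+1) ω ik.1 ik.2) inferInstance) (D t) := fun t =>
    D_meas 𝓕 hCm hBm t le_sup_left ((hSm' t).transpose.mul (hSm' t))
  have hb : ∀ᵐ ω ∂μ, ∀ t : ℕ, ‖D t ω‖ ≤ κ / √(t + 1) ∧ ‖G t ω‖ ≤ κ / √(t + 1) ∧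
      ‖D t ω - G t ω‖ ≤ κ / ((t + 1) * √(t + 1)) ∧
      ‖G (t+1) ω - G t ω‖ ≤ κ / ((t + 1) * √(t + 1)) ∧ vn ((B t ω - A) *ᵥ v) ≤ β := by
    filter_upwards [hgood] with ω hω t
    obtain ⟨-, b2, b3, b4, b5, -⟩ := hdet _ _ hω t
    refine ⟨b3, b2, b4, b5, (vn_mulVec _ _).trans ?_⟩
    refine mul_le_mul_of_nonneg_right ((norm_sub_le _ _).trans ?_) (vn_nonneg _)
    gcongr
    exact hω.hBn t
  have hbn : ∀ᵐ ω ∂μ, ∀ t : ℕ, ‖D t ω * (S (t+1) ω)ᵀ‖ ≤ (κ * √Amax) / √(t + 1) := by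
    filter_upwards [hb, hS_all] with ω hω hs t
    refine (Matrix.l2_opNorm_mul _ _).trans ?_
    rw [mul_div_right_comm]
    exact mul_le_mul (hω t).1 (norm_S (hs (t+1))) (norm_nonneg _) (by positivity)
  have hwm : ∀ t, MV (𝓕 (t+1)) (w (t+1)) := fun t i => hw_meas t i
  have hgf := fun t => gauss_facts (μ := μ) ((hwm t).mono (𝓕.le _)) (hw_gauss (t+1))
  set W : ℝ := ∑ i : Fin p, ∫ x, x ^ 2 ∂(gaussianReal 0
      (Real.toNNReal ((Pi.single i 1 : Fin p → ℝ) ⬝ᵥ (Γ *ᵥ Pi.single i 1)))) with hW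
  have hW0 : 0 ≤ W := Finset.sum_nonneg fun i _ => integral_nonneg fun x => sq_nonneg x
  have hnoise := noise_bound (μ := μ) 𝓕 hSm hwm hDm' hw_indep (fun t => (hgf t).1)
    (fun t => (hgf t).2.1) (fun t => (hgf t).2.2.1) (fun t => (hgf t).2.2.2.le) hbn
  have hm0 : Integrable (fun ω => vn (ensMean J (z 0 ω) - o) ^ 2) μ :=
    mean_int (fun j i => (hz0_meas j i).mono (𝓕.le 0) le_rfl) hz0_int o
  set I0 := ∫ ω, vn (ensMean J (z 0 ω) - o) ^ 2 ∂μ with hI0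
  have hI0n : 0 ≤ I0 := integral_nonneg fun ω => sq_nonneg _
  set q : ℝ := (1/2) * (1 + α) * (κ ^ 2 * 3) with hq
  have hq0 : 0 < q := by positivity
  set K0 := q * I0 with hK0
  set K1 := q * (h ^ 2 * (11 * (κ * β) ^ 2)) with hK1
  set K2 := q * (h ^ 2 * (4 * κ ^ 2 * β * vn v)) with hK2
  set K3 := q * (h ^ 2 * ((κ * √Amax) ^ 2 * W)) with hK3
  have hvn := vn_nonneg v
  clear_value K0 K1 K2 K3 q I0 W β
  have k0 : 0 ≤ K0 := by rw [hK0]; exact mul_nonneg hq0.le hI0n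
  have k1 : 0 ≤ K1 := by rw [hK1]; exact mul_nonneg hq0.le (by positivity)
  have k2 : 0 ≤ K2 := by
    rw [hK2]; exact mul_nonneg hq0.le (mul_nonneg (by positivity) (mul_nonneg (by positivity) hvn))
  have k3 : 0 ≤ K3 := by
    rw [hK3]; exact mul_nonneg hq0.le (mul_nonneg (by positivity) (mul_nonneg (by positivity) hW0))
  refine ⟨K0 + 2 * K1 + K2 + K3 + 1, by positivity, ?_⟩
  intro ε hε τ hτ hmix T hT
  obtain ⟨n, hn⟩ : ∃ n, T = 1 + n + τ := ⟨T - 1 - τ, by omega⟩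
  obtain ⟨-, x2, x3⟩ := erg_bound (μ := μ) 𝓕 hκ hε v hGm hDm hBm
    (fun t => hS_bound (t+1)) hb hβ τ hτ
    (fun t ht => by
      have := hmix t ht
      rw [show t + 1 + τ = t + τ + 1 by ring] at this
      exact this) n
  rw [← hn] at x3
  have x2 := x2 T
  obtain ⟨-, y2, y3⟩ := hnoise T
  set X : Ω → Fin d → ℝ := fun ω => Yseq (fun s => D s ω) (fun s => (B s ω - A) *ᵥ v) T with hX
  set N : Ω → Fin d → ℝ :=
    fun ω => Yseq (fun s => D s ω) (fun s => (S (s+1) ω)ᵀ *ᵥ w (s+1) ω) T with hN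
  have hpt : ∀ᵐ ω ∂μ, limObj A α zstar (ensMean J (z T ω)) ≤ limObj A α zstar o +
      q / (T + 1) * (vn (ensMean J (z 0 ω) - o) ^ 2 + h ^ 2 * vn (X ω) ^ 2
        + h ^ 2 * vn (N ω) ^ 2) := by
    filter_upwards [hgood] with ω hω
    have hd' := hdet _ _ hω
    have hfac := factor_Y (m := fun t => ensMean J (z t ω) - o)
      (ξ := fun t => (B t ω - A) *ᵥ v - (S (t+1) ω)ᵀ *ᵥ w (t+1) ω)
      (fun t => (hd' t).2.2.2.2.2)
      (fun t => traj (S := fun t => S t ω) (w := fun t => w t ω) (u := fun t => u t ω)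
        (z := fun t => z t ω) hJ hA_pd hα (fun t => hu t ω) (fun t j => hupd t ω j) t) T
    rw [Yseq_sub] at hfac
    have hfac' : ensMean J (z T ω) - o =
      Mseq h α (ensCov J (z 0 ω)) (fun s => B s ω) T *ᵥ
        (ensMean J (z 0 ω) - o - h • (X ω - N ω)) := hfac
    have hM := (hd' T).1
    refine (obj_le hA_pd hA_le_one hα zstar _).2.trans ?_
    have hb1 : vn (ensMean J (z 0 ω) - o - h • (X ω - N ω)) ≤
        vn (ensMean J (z 0 ω) - o) + h * vn (X ω) + h * vn (N ω) := by
      have e : ensMean J (z 0 ω) - o - h • (X ω - N ω) =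
        (ensMean J (z 0 ω) - o + (-h) • X ω) + h • N ω := by
        rw [smul_sub, neg_smul]; abel
      rw [e]
      refine (vn_add _ _).trans (add_le_add ((vn_add _ _).trans (add_le_add le_rfl ?_)) ?_)
      · rw [vn_smul, abs_neg, abs_of_pos hh]
      · rw [vn_smul, abs_of_pos hh]
    have hb2 : vn (ensMean J (z T ω) - o) ^ 2 ≤ κ ^ 2 / (T + 1) *
        (3 * (vn (ensMean J (z 0 ω) - o) ^ 2 + h ^ 2 * vn (X ω) ^ 2 + h ^ 2 * vn (N ω) ^ 2)) := by
      have s1 : vn (ensMean J (z T ω) - o) ≤ κ / √(T + 1) *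
          (vn (ensMean J (z 0 ω) - o) + h * vn (X ω) + h * vn (N ω)) := by
        rw [hfac']
        exact (vn_mulVec _ _).trans (mul_le_mul hM hb1 (vn_nonneg _) (by positivity))
      have s2 := pow_le_pow_left₀ (vn_nonneg _) s1 2
      rw [mul_pow, div_pow, Real.sq_sqrt (by positivity)] at s2
      refine s2.trans (mul_le_mul_of_nonneg_left ?_ (by positivity))
      nlinarith [sq_nonneg (vn (ensMean J (z 0 ω) - o) - h * vn (X ω)),
        sq_nonneg (vn (ensMean J (z 0 ω) - o) - h * vn (N ω)),
        sq_nonneg (h * vn (X ω) - h * vn (N ω))]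
    have := mul_le_mul_of_nonneg_left hb2 (by positivity : 0 ≤ (1/2) * (1 + α))
    refine add_le_add le_rfl (this.trans (le_of_eq ?_))
    rw [hq]; field_simp
  have i1 : Integrable (fun ω => vn (ensMean J (z 0 ω) - o) ^ 2 + h ^ 2 * vn (X ω) ^ 2) μ :=
    hm0.add (x2.const_mul _)
  have i2 : Integrable (fun ω => vn (ensMean J (z 0 ω) - o) ^ 2 + h ^ 2 * vn (X ω) ^ 2
        + h ^ 2 * vn (N ω) ^ 2) μ := i1.add (y2.const_mul _)
  have hIntg := integral_mono_of_nonneg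
    (Filter.Eventually.of_forall fun ω => (obj_le hA_pd hA_le_one hα zstar (ensMean J (z T ω))).1)
    ((integrable_const (limObj A α zstar o)).add (i2.const_mul (q / (T + 1)))) hpt
  simp only [Pi.add_apply] at hIntg
  rw [integral_add (integrable_const _) (i2.const_mul _), integral_const_mul,
    integral_add i1 (y2.const_mul _), integral_add hm0 (x2.const_mul _), integral_const_mul,
    integral_const_mul, integral_const, probReal_univ, one_smul] at hIntg
  have hfin := final_arith k0 k1 k2 k3 hε hlam hτ hn
  have hP : 0 ≤ ε + (1 + (τ:ℝ) * (1 + Real.log τ + Real.log T)) / (T:ℝ) ^ (2 * α * σl) := by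
    have : 0 ≤ Real.log τ := Real.log_natCast_nonneg _
    have : 0 ≤ Real.log T := Real.log_natCast_nonneg _
    positivity
  have hstep2 : q / (T + 1) * (I0 + h ^ 2 * ∫ ω, vn (X ω) ^ 2 ∂μ + h ^ 2 * ∫ ω, vn (N ω) ^ 2 ∂μ) ≤
    (K0 + (K1 * (τ * (1 + harmonic (n + 1))) + K2 * ε * n) + K3 * harmonic T) / ((T:ℝ) + 1) := by
    have : q / (T + 1) * (I0 + h ^ 2 * ∫ ω, vn (X ω) ^ 2 ∂μ + h ^ 2 * ∫ ω, vn (N ω) ^ 2 ∂μ) ≤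
      q / (T + 1) * (I0 + h ^ 2 * ((11 * (κ * β) ^ 2) * (τ * (1 + harmonic (n + 1)))
        + 4 * κ ^ 2 * β * vn v * ε * n) + h ^ 2 * ((κ * √Amax) ^ 2 * W * harmonic T)) := by
      gcongr
    refine this.trans (le_of_eq ?_)
    rw [hK0, hK1, hK2, hK3]; ring
  rw [← hI0] at hIntg
  have hall := hIntg.trans (add_le_add le_rfl (hstep2.trans hfin))
  rw [sub_le_iff_le_add']
  refine hall.trans (add_le_add le_rfl (mul_le_mul_of_nonneg_right ?_ hP))
  linarith

end DekiAux
/-- Convergence of DEKI with ergodic data (Theorem 2.2): under the ergodic DEKI setting,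
with `C_0 ⪰ σ_l I` a.s., `λ = 2ασ_l ∈ (0,1)`, `E_0 > 0` and the step-size condition,
there is `C > 0`, independent of `ε`, `τ` and `T`, such that whenever the mixing bound
`‖E[S_{t+1+τ}ᵀS_{t+1+τ}|𝓕_t] − A‖ ≤ ε` holds a.s. for all `t ≥ 1`, then for all
`T ≥ τ + 1`, `E[J(z̄_T)] − J(z^{opt}) ≤ C·(ε + (1 + τ(1 + log τ + log T))/T^λ)`. -/
theorem deki_ergodic_convergence
    {d p J : ℕ} (hd : 0 < d) (hp : 0 < p) (hJ : 0 < J)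
    {Ω : Type*} {m : MeasurableSpace Ω} (μ : Measure Ω) [IsProbabilityMeasure μ]
    (𝓕 : Filtration ℕ m)
    (α h Amax σl : ℝ) (hα : 0 < α) (hh : 0 < h) (hAmax : 0 < Amax) (hσl : 0 < σl)
    (hlam : 2 * α * σl < 1)
    (A : Matrix (Fin d) (Fin d) ℝ) (hA_pd : A.PosDef)
    (hA_le_one : ((1 : Matrix (Fin d) (Fin d) ℝ) - A).PosSemidef)
    (zstar : Fin d → ℝ)
    (Γ : Matrix (Fin p) (Fin p) ℝ) (hΓ : Γ.PosDef)
    (S : ℕ → Ω → Matrix (Fin p) (Fin d) ℝ)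
    (w : ℕ → Ω → Fin p → ℝ) (u : ℕ → Ω → Fin p → ℝ)
    (z : ℕ → Ω → Fin J → Fin d → ℝ)
    -- the observation operators are adapted and uniformly bounded
    (hS_adapted : ∀ (t : ℕ) i k, Measurable[𝓕 t] fun ω => S t ω i k)
    (hS_bound : ∀ t : ℕ, ∀ᵐ ω ∂μ, opNorm ((S t ω)ᵀ * (S t ω)) ≤ Amax)
    -- the noise is i.i.d. centered Gaussian with covariance Γ, adapted and
    -- independent of the past and of the current observation operator
    (hw_meas : ∀ (t : ℕ) i, Measurable[𝓕 (t+1)] fun ω => w (t+1) ω i)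
    (hw_gauss : ∀ (t : ℕ) (a : Fin p → ℝ),
      Measure.map (fun ω => ∑ i, a i * w t ω i) μ =
        ProbabilityTheory.gaussianReal 0 (Real.toNNReal (a ⬝ᵥ (Γ *ᵥ a))))
    (hw_indep : ∀ t : ℕ, ProbabilityTheory.Indep
      (MeasurableSpace.comap (fun ω (i : Fin p) => w (t+1) ω i) inferInstance)
      (𝓕 t ⊔ MeasurableSpace.comap
        (fun ω (ik : Fin p × Fin d) => S (t+1) ω ik.1 ik.2) inferInstance) μ)
    -- observations and DEKI dynamics
    (hu : ∀ (t : ℕ) ω, u t ω = (S t ω) *ᵥ zstar + w t ω)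
    (hupd : ∀ (t : ℕ) ω (j : Fin J), z (t+1) ω j = z t ω j -
      h • ((ensCov J (z t ω)) *ᵥ
        ((S (t+1) ω)ᵀ *ᵥ ((S (t+1) ω) *ᵥ (z t ω j) - u (t+1) ω) + α • z t ω j)))
    -- initial ensemble: 𝓕₀-measurable, square-integrable, C₀ ⪰ σₗ I a.s.,
    -- E₀ > 0 a.s. and step-size condition a.s.
    (hz0_meas : ∀ (j : Fin J) i, Measurable[𝓕 0] fun ω => z 0 ω j i)
    (hz0_int : ∀ j : Fin J, Integrable (fun ω => enormSq (z 0 ω j)) μ)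
    (hC0 : ∀ᵐ ω ∂μ,
      (ensCov J (z 0 ω) - σl • (1 : Matrix (Fin d) (Fin d) ℝ)).PosSemidef)
    (hE0 : ∀ᵐ ω ∂μ, 0 < ensEnergy J (z 0 ω))
    (hstep : ∀ᵐ ω ∂μ, h ≤
      min (α / ((J:ℝ) * (Amax + α)^2)) ((J:ℝ)/α) * (ensEnergy J (z 0 ω))⁻¹) :
    ∃ C > 0, ∀ ε > 0, ∀ τ : ℕ, 1 ≤ τ →
      (∀ t : ℕ, 1 ≤ t → ∀ᵐ ω ∂μ,
        opNorm ((Matrix.of fun i k =>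
          (μ[fun ω' => ((S (t+1+τ) ω')ᵀ * (S (t+1+τ) ω')) i k | 𝓕 t]) ω) - A) ≤ ε) →
      ∀ T : ℕ, τ + 1 ≤ T →
        (∫ ω, limObj A α zstar (ensMean J (z T ω)) ∂μ) - limObj A α zstar (limOpt A α zstar) ≤
          C * (ε + (1 + (τ:ℝ) * (1 + Real.log τ + Real.log T)) / (T:ℝ) ^ (2 * α * σl)) := by
  classical
  obtain ⟨κ, hκ, hdet⟩ := DekiAux.det_bounds (d := d) hd hh hα hAmax hσl
  exact DekiAux.main_aux hd hJ μ 𝓕 α h Amax σl hα hh hAmax hlam A hA_pd hA_le_one zstar Γ S w u z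
    hS_adapted hS_bound hw_meas hw_gauss hw_indep hu hupd hz0_meas hz0_int hC0 hE0 hstep κ hκ hdet
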